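/- arXiv:1506.05679 — 4 statements merged into one kernel-verified Lean document; each statement's English description precedes it below -/
import Mathlib

section
/- Let Λ be a ℤ-lattice in ℂ² and let σ be a ℂ-linear automorphism of ℂ² with σ(Λ) = Λ. If the induced automorphism ⋀²(σ|_Λ) of ⋀²Λ is the identity, then σ = id or σ = −id. -/
set_option synthInstance.maxHeartbeats 1000000
set_option maxHeartbeats 1000000

open ExteriorAlgebra Module

noncomputable section

/-- `Λ` is a `ℤ`-lattice in `ℂ²`: it is the `ℤ`-span of an `ℝ`-basis of `ℂ²`. -/
def IsComplexTorusLattice (Λ : Submodule ℤ (ℂ × ℂ)) : Prop :=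
  ∃ b : Basis (Fin 4) ℝ (ℂ × ℂ), Λ = Submodule.span ℤ (Set.range b)

/-- The image of the `n`-th exterior power under the algebra morphism induced by a linear map
lands in the `n`-th exterior power. -/
lemma map_mem_exteriorPower {R M N : Type*} [CommRing R] [AddCommGroup M] [Module R M]
    [AddCommGroup N] [Module R N] (f : M →ₗ[R] N) (n : ℕ) {x : ExteriorAlgebra R M}
    (hx : x ∈ ⋀[R]^n M) : ExteriorAlgebra.map f x ∈ ⋀[R]^n N := by
  rw [← ExteriorAlgebra.ιMulti_span_fixedDegree] at hx ⊢
  induction hx using Submodule.span_induction with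
  | mem y hy =>
      obtain ⟨m, rfl⟩ := hy
      rw [ExteriorAlgebra.map_apply_ιMulti]
      exact Submodule.subset_span ⟨f ∘ m, rfl⟩
  | zero => simp
  | add a b _ _ ha hb => rw [map_add]; exact Submodule.add_mem _ ha hb
  | smul r a _ ha => rw [map_smul]; exact Submodule.smul_mem _ r ha

/-- The `n`-th exterior power of a linear map. -/
def extPowMap {R M N : Type*} [CommRing R] [AddCommGroup M] [Module R M]
    [AddCommGroup N] [Module R N] (n : ℕ) (f : M →ₗ[R] N) : ⋀[R]^n M →ₗ[R] ⋀[R]^n N :=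
  LinearMap.restrict (ExteriorAlgebra.map f).toLinearMap
    (fun _ hx => map_mem_exteriorPower f n hx)

/-- The automorphism `σ` of `ℂ²` maps the lattice `Λ` onto itself. -/
def PreservesLattice (σ : (ℂ × ℂ) ≃ₗ[ℂ] (ℂ × ℂ)) (Λ : Submodule ℤ (ℂ × ℂ)) : Prop :=
  Λ.map ((σ.restrictScalars ℤ : (ℂ × ℂ) ≃ₗ[ℤ] (ℂ × ℂ)) : (ℂ × ℂ) →ₗ[ℤ] (ℂ × ℂ)) = Λ

/-- The restriction `σ|_Λ` of `σ` to the lattice `Λ`, as a `ℤ`-linear automorphism. -/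
def latRestrict (σ : (ℂ × ℂ) ≃ₗ[ℂ] (ℂ × ℂ)) (Λ : Submodule ℤ (ℂ × ℂ))
    (h : PreservesLattice σ Λ) : ↥Λ ≃ₗ[ℤ] ↥Λ :=
  (σ.restrictScalars ℤ).ofSubmodules Λ Λ h

/-- The induced endomorphism `⋀²(σ|_Λ)` of `⋀²Λ`. -/
def extSq (σ : (ℂ × ℂ) ≃ₗ[ℂ] (ℂ × ℂ)) (Λ : Submodule ℤ (ℂ × ℂ))
    (h : PreservesLattice σ Λ) : Module.End ℤ (⋀[ℤ]^2 ↥Λ) :=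
  extPowMap 2 (latRestrict σ Λ h).toLinearMap

/-- The invariant lattice `T = {x ∈ ⋀²Λ : ⋀²(σ|_Λ)(x) = x}`. -/
def invLat (σ : (ℂ × ℂ) ≃ₗ[ℂ] (ℂ × ℂ)) (Λ : Submodule ℤ (ℂ × ℂ))
    (h : PreservesLattice σ Λ) : Submodule ℤ (⋀[ℤ]^2 ↥Λ) :=
  LinearMap.ker (extSq σ Λ h - LinearMap.id)

/-- `b` is the wedge form on `⋀²Λ` determined by the generator `vol` of `⋀⁴Λ`, i.e.
`x ∧ y = b(x,y) • vol`. -/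
def IsWedgeForm (Λ : Submodule ℤ (ℂ × ℂ)) (vol : ⋀[ℤ]^4 ↥Λ)
    (b : ⋀[ℤ]^2 ↥Λ →ₗ[ℤ] ⋀[ℤ]^2 ↥Λ →ₗ[ℤ] ℤ) : Prop :=
  ∀ x y : ⋀[ℤ]^2 ↥Λ, (x : ExteriorAlgebra ℤ ↥Λ) * (y : ExteriorAlgebra ℤ ↥Λ)
    = b x y • (vol : ExteriorAlgebra ℤ ↥Λ)

/-- The restriction of the form `b` to the submodule `T` admits Gram matrix `G`
in some basis; i.e. `(T, b|_T)` is isometric to the lattice with Gram matrix `G`. -/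
def HasGramMatrix {M : Type*} [AddCommGroup M] [Module ℤ M] (b : M →ₗ[ℤ] M →ₗ[ℤ] ℤ)
    (T : Submodule ℤ M) {n : ℕ} (G : Matrix (Fin n) (Fin n) ℤ) : Prop :=
  ∃ v : Basis (Fin n) ℤ ↥T, ∀ i j, b (v i : M) (v j : M) = G i j

/-!
If `⋀² f` is the identity, then `f u ∧ u ∧ v = f u ∧ f u ∧ f v = 0` for all `u` and `v`. In a basis
`e`, the coefficient of `eₖ ∧ eᵢ ∧ eₘ` in `f eᵢ ∧ eᵢ ∧ eₘ` is the `k`-th coordinate of `f eᵢ`, so in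
rank at least three `f` is diagonal. Its diagonal entries satisfy `aᵢ aⱼ = 1` for `i ≠ j`, and a
third index forces them all to be equal: `f` is multiplication by a scalar of square `1`. Over a
domain such a scalar is `1` or `-1`, and a linear map is determined by its restriction to a spanning
set such as a lattice.
-/

theorem extPowMap_eq_exteriorPower_map {R M N : Type*} [CommRing R] [AddCommGroup M] [Module R M]
    [AddCommGroup N] [Module R N] (n : ℕ) (f : M →ₗ[R] N) :
    extPowMap n f = exteriorPower.map n f := by
  ext v
  simp only [LinearMap.compAlternatingMap_apply, exteriorPower.map_apply_ιMulti]
  exact ExteriorAlgebra.map_apply_ιMulti f v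

section TrivialExteriorPower

variable {R M ι : Type*} [CommRing R] [AddCommGroup M] [Module R M] {f : M →ₗ[R] M}

theorem ιMulti_comp_eq_of_exteriorPower_map_eq_id {n : ℕ}
    (hf : exteriorPower.map n f = LinearMap.id) (v : Fin n → M) :
    exteriorPower.ιMulti R n (f ∘ v) = exteriorPower.ιMulti R n v := by
  rw [← exteriorPower.map_apply_ιMulti, hf, LinearMap.id_apply]

theorem det_dual_apply_eq_of_exteriorPower_map_eq_id {n : ℕ}
    (hf : exteriorPower.map n f = LinearMap.id) (φ : Fin n → Dual R M) (v : Fin n → M) :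
    (Matrix.of fun i j => φ j (f (v i))).det = (Matrix.of fun i j => φ j (v i)).det := by
  simpa only [exteriorPower.pairingDual_ιMulti_ιMulti, Function.comp_apply] using
    congrArg (exteriorPower.pairingDual R M n (exteriorPower.ιMulti R n φ))
      (ιMulti_comp_eq_of_exteriorPower_map_eq_id hf v)

theorem ιMulti_vecCons_apply_eq_zero_of_exteriorPower_map_eq_id {n : ℕ}
    (hf : exteriorPower.map n f = LinearMap.id) (v : Fin n → M) (i : Fin n) :
    exteriorPower.ιMulti R (n + 1) (Matrix.vecCons (f (v i)) v) = 0 := by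
  have hv : ExteriorAlgebra.ιMulti R n (f ∘ v) = ExteriorAlgebra.ιMulti R n v :=
    congrArg Subtype.val (ιMulti_comp_eq_of_exteriorPower_map_eq_id hf v)
  apply Subtype.ext
  calc ExteriorAlgebra.ιMulti R (n + 1) (Matrix.vecCons (f (v i)) v)
      = ExteriorAlgebra.ι R (f (v i)) * ExteriorAlgebra.ιMulti R n v :=
        ExteriorAlgebra.ιMulti_succ_apply _
    _ = ExteriorAlgebra.ι R (f (v i)) * ExteriorAlgebra.ιMulti R n (f ∘ v) := by rw [hv]
    _ = ExteriorAlgebra.ιMulti R (n + 1) (Matrix.vecCons (f (v i)) (f ∘ v)) :=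
        (ExteriorAlgebra.ιMulti_succ_apply (Matrix.vecCons (f (v i)) (f ∘ v))).symm
    _ = 0 :=
        AlternatingMap.map_eq_zero_of_eq _ _ (i := 0) (j := i.succ) rfl (Fin.succ_ne_zero i).symm

theorem repr_apply_eq_zero_of_exteriorPower_map_two_eq_id (e : Basis ι R M)
    (hι : 3 ≤ Cardinal.mk ι) (hf : exteriorPower.map 2 f = LinearMap.id) {i k : ι} (hki : k ≠ i) :
    e.repr (f (e i)) k = 0 := by
  obtain ⟨m, hmk, hmi⟩ := Cardinal.exists_ne_ne_of_three_le hι k i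
  have hdet := congrArg
    (exteriorPower.pairingDual R M 3 (exteriorPower.ιMulti R 3 ![e.coord k, e.coord i, e.coord m]))
    (ιMulti_vecCons_apply_eq_zero_of_exteriorPower_map_eq_id hf ![e i, e m] 0)
  rw [map_zero, exteriorPower.pairingDual_ιMulti_ιMulti, Matrix.det_fin_three] at hdet
  simpa [Finsupp.single_apply, hki, hki.symm, hmk, hmk.symm, hmi, hmi.symm] using hdet

theorem apply_eq_repr_smul_of_exteriorPower_map_two_eq_id (e : Basis ι R M)
    (hι : 3 ≤ Cardinal.mk ι) (hf : exteriorPower.map 2 f = LinearMap.id) (i : ι) :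
    f (e i) = e.repr (f (e i)) i • e i := by
  refine e.ext_elem fun k => ?_
  rcases eq_or_ne k i with rfl | hki
  · simp
  · simp [repr_apply_eq_zero_of_exteriorPower_map_two_eq_id e hι hf hki, hki]

theorem repr_mul_repr_eq_one_of_exteriorPower_map_two_eq_id (e : Basis ι R M)
    (hι : 3 ≤ Cardinal.mk ι) (hf : exteriorPower.map 2 f = LinearMap.id) {i j : ι} (hij : i ≠ j) :
    e.repr (f (e i)) i * e.repr (f (e j)) j = 1 := by
  have hminor := det_dual_apply_eq_of_exteriorPower_map_eq_id hf
    ![e.coord i, e.coord j] ![e i, e j]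
  simpa [Matrix.det_fin_two, hij, hij.symm,
    repr_apply_eq_zero_of_exteriorPower_map_two_eq_id e hι hf hij] using hminor

theorem exists_eq_smul_id_of_exteriorPower_map_two_eq_id [Nontrivial R] [Module.Free R M]
    (hM : 3 ≤ Module.rank R M) (hf : exteriorPower.map 2 f = LinearMap.id) :
    ∃ c : R, c * c = 1 ∧ f = c • LinearMap.id := by
  let e := Module.Free.chooseBasis R M
  have hι : 3 ≤ Cardinal.mk (Module.Free.ChooseBasisIndex R M) :=
    hM.trans_eq (Module.Free.rank_eq_card_chooseBasisIndex R M)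
  let a := fun i => e.repr (f (e i)) i
  have hmul : ∀ {i j}, i ≠ j → a i * a j = 1 :=
    repr_mul_repr_eq_one_of_exteriorPower_map_two_eq_id e hι hf
  have hconst : ∀ i j, a i = a j := fun i j => by
    obtain ⟨m, hmi, hmj⟩ := Cardinal.exists_ne_ne_of_three_le hι i j
    exact left_inv_eq_right_inv (hmul hmi.symm) (hmul hmj)
  obtain ⟨i₀⟩ : Nonempty (Module.Free.ChooseBasisIndex R M) :=
    Cardinal.mk_ne_zero_iff.mp (lt_of_lt_of_le (by simp) hι).ne'
  obtain ⟨j₀, hj₀, -⟩ := Cardinal.exists_ne_ne_of_three_le hι i₀ i₀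
  refine ⟨a i₀, ?_, e.ext fun i => ?_⟩
  · rw [← hmul hj₀, hconst j₀ i₀]
  · rw [LinearMap.smul_apply, LinearMap.id_apply, hconst i₀ i]
    exact apply_eq_repr_smul_of_exteriorPower_map_two_eq_id e hι hf i

theorem eq_id_or_eq_neg_id_of_exteriorPower_map_two_eq_id [IsDomain R] [Module.Free R M]
    (hM : 3 ≤ Module.rank R M) (hf : exteriorPower.map 2 f = LinearMap.id) :
    f = LinearMap.id ∨ f = -LinearMap.id := by
  obtain ⟨c, hc, rfl⟩ := exists_eq_smul_id_of_exteriorPower_map_two_eq_id hM hf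
  rcases mul_self_eq_one_iff.mp hc with rfl | rfl
  · exact Or.inl (one_smul R _)
  · exact Or.inr (neg_one_smul R _)

end TrivialExteriorPower

namespace IsComplexTorusLattice

variable {Λ : Submodule ℤ (ℂ × ℂ)}

theorem free (hΛ : IsComplexTorusLattice Λ) : Module.Free ℤ Λ := by
  obtain ⟨b, rfl⟩ := hΛ
  exact Module.Free.of_basis (b.restrictScalars ℤ)

theorem rank_eq_four (hΛ : IsComplexTorusLattice Λ) : Module.rank ℤ Λ = 4 := by
  obtain ⟨b, rfl⟩ := hΛ
  simpa using rank_eq_card_basis (b.restrictScalars ℤ)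

theorem span_complex_eq_top (hΛ : IsComplexTorusLattice Λ) :
    Submodule.span ℂ (Λ : Set (ℂ × ℂ)) = ⊤ := by
  obtain ⟨b, rfl⟩ := hΛ
  rw [Submodule.span_span_of_tower]
  exact Submodule.span_eq_top_of_span_eq_top ℝ ℂ _ b.span_eq

end IsComplexTorusLattice

theorem stmt_2_general {R K V : Type*} [CommRing R] [IsDomain R] [Semiring K] [AddCommGroup V]
    [Module R V] [Module K V] (Λ : Submodule R V) [Module.Free R Λ] (hrank : 3 ≤ Module.rank R Λ)
    (hspan : Submodule.span K (Λ : Set V) = ⊤) (σ : V →ₗ[K] V) (f : Λ →ₗ[R] Λ)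
    (hσ : ∀ x, (f x : V) = σ x) (hid : extPowMap 2 f = LinearMap.id) :
    σ = LinearMap.id ∨ σ = -LinearMap.id := by
  rw [extPowMap_eq_exteriorPower_map] at hid
  rcases eq_id_or_eq_neg_id_of_exteriorPower_map_two_eq_id hrank hid with rfl | rfl
  · exact Or.inl (LinearMap.ext_on hspan fun x hx => (hσ ⟨x, hx⟩).symm)
  · exact Or.inr (LinearMap.ext_on hspan fun x hx => (hσ ⟨x, hx⟩).symm)

/-- If `Λ` is a `ℤ`-lattice in `ℂ²` and `σ` is a `ℂ`-linear automorphism of `ℂ²` with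
`σ(Λ) = Λ` such that the induced automorphism `⋀²(σ|_Λ)` of `⋀²Λ` is the identity, then
`σ = id` or `σ = -id`. -/
theorem stmt_2 (Λ : Submodule ℤ (ℂ × ℂ)) (hΛ : IsComplexTorusLattice Λ)
    (σ : (ℂ × ℂ) ≃ₗ[ℂ] (ℂ × ℂ)) (hσΛ : PreservesLattice σ Λ)
    (hid : extSq σ Λ hσΛ = LinearMap.id) :
    σ = LinearEquiv.refl ℂ (ℂ × ℂ) ∨ σ = LinearEquiv.neg ℂ := by
  have := hΛ.free
  exact (stmt_2_general Λ (hΛ.rank_eq_four ▸ by norm_num) hΛ.span_complex_eq_top σ.toLinearMap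
    (latRestrict σ Λ hσΛ).toLinearMap (fun _ => rfl) hid).imp
    (fun h => LinearEquiv.toLinearMap_injective h) (fun h => LinearEquiv.toLinearMap_injective h)
end
end

section
/- Let Λ be a ℤ-lattice in ℂ² and let σ be a ℂ-linear automorphism of ℂ² of finite order with σ(Λ) = Λ, such that the induced automorphism ⋀²(σ|_Λ) of ⋀²Λ has prime order p. Then the rank of the fixed submodule T = {x ∈ ⋀²Λ : ⋀²(σ|_Λ)(x) = x} (a free ℤ-module) is even. -/
set_option synthInstance.maxHeartbeats 1000000
set_option maxHeartbeats 1000000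

open ExteriorAlgebra Module

noncomputable section

/-!
The wedge product makes `⋀²Λ` a nondegenerate symmetric lattice of rank `6`, on which `⋀²(σ|_Λ)`
acts by isometries because `det (σ|_Λ) = 1`. The parity of the corank of the fixed lattice of an
isometry `g` is read off its determinant: on the quotient by the fixed vectors, the Wall form
`θ(x, y) = B(gx - x, y)` is nondegenerate and satisfies `θ(x, gy) = -θ(y, x)`; comparing Gram
determinants gives `det g = (-1) ^ corank`. So it remains to see that `σ|_Λ` and its exterior powers
have determinant `1`. These determinants are units of `ℤ`, and they are nonnegative because
complex matrices are products of squares (of diagonal matrices and of transvections), hence have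
nonnegative image under every multiplicative map to `ℝ`.
-/

section IsometryDeterminant

variable {R M : Type*} [CommRing R] [AddCommGroup M] [Module R M]

lemma det_eq_neg_one_pow_finrank_of_apply_eq_neg_apply [IsDomain R] [Module.Free R M]
    [Module.Finite R M] {θ : LinearMap.BilinForm R M} (hθ : θ.SeparatingLeft) {g : Module.End R M}
    (hg : ∀ x y, θ x (g y) = -θ y x) : LinearMap.det g = (-1) ^ finrank R M := by
  let b := Module.Free.chooseBasis R M
  have hdet : (LinearMap.BilinForm.toMatrix b θ).det ≠ 0 :=
    Matrix.separatingLeft_iff_det_ne_zero.1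
      ((LinearMap.BilinForm.separatingLeft_toMatrix_iff b).2 hθ)
  have hmul : LinearMap.BilinForm.toMatrix b θ * LinearMap.toMatrix b b g =
      -(LinearMap.BilinForm.toMatrix b θ).transpose := by
    rw [← LinearMap.BilinForm.toMatrix_compRight]
    ext i j
    simp [hg]
  have hdet_mul := congrArg Matrix.det hmul
  rw [Matrix.det_mul, Matrix.det_neg, Matrix.det_transpose, LinearMap.det_toMatrix,
    ← finrank_eq_card_basis b, mul_comm] at hdet_mul
  exact mul_right_cancel₀ hdet hdet_mul

/-- The form `(x, y) ↦ B (g x - x) y` induced by an isometry `g` of `B` on the quotient by the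
vectors fixed by `g`. It is the Wall form of `g`, transported from the image of `g - 1` so that
no division is needed over a ring. -/
def wallForm (B : LinearMap.BilinForm R M) {g : Module.End R M}
    (hg : ∀ x y, B (g x) (g y) = B x y) :
    LinearMap.BilinForm R (M ⧸ LinearMap.ker (g - LinearMap.id)) :=
  LinearMap.liftQ₂ _ _ (B ∘ₗ (g - LinearMap.id)) (LinearMap.ker_le_ker_comp _ _) fun y hy => by
    have hy : g y = y := sub_eq_zero.1 hy
    refine LinearMap.mem_ker.2 (LinearMap.ext fun x => ?_)
    simpa [sub_eq_zero, hy] using hg x y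

lemma wallForm_separatingLeft {B : LinearMap.BilinForm R M} (hB : B.SeparatingLeft)
    {g : Module.End R M} (hg : ∀ x y, B (g x) (g y) = B x y) :
    (wallForm B hg).SeparatingLeft := by
  intro q hq
  obtain ⟨x, rfl⟩ := Submodule.Quotient.mk_surjective _ q
  exact (Submodule.Quotient.mk_eq_zero _).2
    (hB _ fun y => hq (Submodule.Quotient.mk y))

theorem det_eq_neg_one_pow_finrank_quotient_ker [IsDomain R] [IsPrincipalIdealRing R]
    [Module.Free R M] [Module.Finite R M] {B : LinearMap.BilinForm R M} (hB : B.SeparatingLeft)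
    (hsymm : B.IsSymm) {g : Module.End R M} (hg : ∀ x y, B (g x) (g y) = B x y) :
    LinearMap.det g = (-1) ^ finrank R (M ⧸ LinearMap.ker (g - LinearMap.id)) := by
  set K := LinearMap.ker (g - LinearMap.id)
  have hfix : ∀ x ∈ K, g x = x := fun x hx => sub_eq_zero.1 hx
  have hle : K ≤ K.comap g := fun x hx => by rwa [Submodule.mem_comap, hfix x hx]
  have hrestrict : g.restrict hle = LinearMap.id :=
    LinearMap.ext fun x => Subtype.ext (hfix x x.2)
  have : Module.Free R (M ⧸ K) :=
    Module.Free.of_equiv (g - LinearMap.id).quotKerEquivRange.symm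
  rw [LinearMap.det_eq_det_mul_det K g hle, hrestrict, LinearMap.det_id, one_mul]
  refine det_eq_neg_one_pow_finrank_of_apply_eq_neg_apply (wallForm_separatingLeft hB hg) ?_
  intro q r
  obtain ⟨x, rfl⟩ := Submodule.Quotient.mk_surjective _ q
  obtain ⟨y, rfl⟩ := Submodule.Quotient.mk_surjective _ r
  change B (g x - x) (g y) = -B (g y - y) x
  rw [map_sub, map_sub, LinearMap.sub_apply, LinearMap.sub_apply, hg, hsymm.eq x y,
    hsymm.eq x (g y), neg_sub]

theorem even_finrank_iff_even_finrank_ker_of_det_eq_one [IsDomain R] [IsPrincipalIdealRing R]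
    [Module.Free R M] [Module.Finite R M] (hR : ringChar R ≠ 2) {B : LinearMap.BilinForm R M}
    (hB : B.SeparatingLeft) (hsymm : B.IsSymm) {g : Module.End R M}
    (hg : ∀ x y, B (g x) (g y) = B x y) (hdet : LinearMap.det g = 1) :
    Even (finrank R M) ↔ Even (finrank R (LinearMap.ker (g - LinearMap.id))) := by
  have hquot : Even (finrank R (M ⧸ LinearMap.ker (g - LinearMap.id))) := by
    by_contra hodd
    have h := det_eq_neg_one_pow_finrank_quotient_ker hB hsymm hg
    rw [hdet, (Nat.not_even_iff_odd.1 hodd).neg_one_pow] at h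
    exact Ring.neg_one_ne_one_of_char_ne_two hR h.symm
  rw [← (LinearMap.ker (g - LinearMap.id)).finrank_quotient_add_finrank, Nat.even_add]
  simp only [hquot, true_iff]

end IsometryDeterminant

section WedgeForm

variable {R M : Type*} [CommRing R] [AddCommGroup M] [Module R M]

lemma ι_mul_ι_mem_center (a b : M) :
    ι R a * ι R b ∈ Subalgebra.center R (ExteriorAlgebra R M) := by
  have hswap (u v : M) : ι R u * ι R v = -(ι R v * ι R u) :=
    eq_neg_of_add_eq_zero_left (ι_add_mul_swap u v)
  refine Subalgebra.mem_center_iff.2 fun y => ?_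
  induction y using ExteriorAlgebra.induction with
  | algebraMap r => exact Algebra.commutes r _
  | ι c => rw [← mul_assoc, hswap c a, neg_mul, mul_assoc, hswap c b, mul_neg, neg_neg, mul_assoc]
  | mul y z hy hz => rw [mul_assoc, hz, ← mul_assoc, hy, mul_assoc]
  | add y z hy hz => rw [add_mul, hy, hz, mul_add]

lemma exteriorPower_le_center {k : ℕ} (hk : Even k) :
    ⋀[R]^k M ≤ (Subalgebra.center R (ExteriorAlgebra R M)).toSubmodule := by
  obtain ⟨m, rfl⟩ := hk.exists_two_nsmul
  rw [smul_eq_mul, ExteriorAlgebra.exteriorPower, pow_mul, sq]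
  have hle : LinearMap.range (ι R) * LinearMap.range (ι R) ≤
      (Subalgebra.center R (ExteriorAlgebra R M)).toSubmodule := by
    rw [Submodule.mul_le]
    rintro _ ⟨a, rfl⟩ _ ⟨b, rfl⟩
    exact ι_mul_ι_mem_center a b
  exact fun x hx => Submodule.pow_induction_on_left _ (Subalgebra.algebraMap_mem _)
    (fun _ _ => add_mem) (fun _ hy _ hx => Subalgebra.mul_mem _ (hle hy) hx) hx

lemma extPowMap_eq_map {N : Type*} [AddCommGroup N] [Module R N] (n : ℕ) (f : M →ₗ[R] N) :
    extPowMap n f = exteriorPower.map n f := by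
  ext v
  exact (map_apply_ιMulti f v).trans
    (congrArg Subtype.val (exteriorPower.map_apply_ιMulti f v)).symm

lemma coe_exteriorPower_map {N : Type*} [AddCommGroup N] [Module R N] {n : ℕ} (f : M →ₗ[R] N)
    (x : ⋀[R]^n M) : (exteriorPower.map n f x : ExteriorAlgebra R N) = ExteriorAlgebra.map f x := by
  rw [← extPowMap_eq_map]
  rfl

/-- The coefficient of `b 0 ∧ ⋯ ∧ b (n - 1)` in an element of the exterior algebra (also known as
its Berezin integral); it vanishes on every exterior power other than the top one. -/
def volumeCoeff {n : ℕ} (b : Basis (Fin n) R M) : ExteriorAlgebra R M →ₗ[R] R :=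
  liftAlternating (Pi.single n b.det)

lemma volumeCoeff_ιMulti {n : ℕ} (b : Basis (Fin n) R M) (v : Fin n → M) :
    volumeCoeff b (ιMulti R n v) = b.det v := by
  rw [volumeCoeff, liftAlternating_apply_ιMulti, Pi.single_eq_same]

lemma volumeCoeff_map {n : ℕ} (b : Basis (Fin n) R M) (f : Module.End R M)
    (x : ExteriorAlgebra R M) :
    volumeCoeff b (ExteriorAlgebra.map f x) = LinearMap.det f * volumeCoeff b x := by
  suffices h : volumeCoeff b ∘ₗ (ExteriorAlgebra.map f).toLinearMap =
      LinearMap.det f • volumeCoeff b from LinearMap.congr_fun h x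
  ext i v
  rcases eq_or_ne i n with rfl | hi
  · simp [map_apply_ιMulti, volumeCoeff_ιMulti, Basis.det_comp]
  · simp [map_apply_ιMulti, volumeCoeff, liftAlternating_apply_ιMulti, hi]

/-- The pairing `⋀ᵏM × ⋀ˡM → ⋀ᵏ⁺ˡM ≅ R` given by the wedge product, where the basis `b` of the
module `M` of rank `k + l` identifies its top exterior power with `R`. -/
def wedgePairing {k l : ℕ} (b : Basis (Fin (k + l)) R M) : ⋀[R]^k M →ₗ[R] ⋀[R]^l M →ₗ[R] R :=
  ((LinearMap.mul R (ExteriorAlgebra R M)).compr₂ (volumeCoeff b)).domRestrict₁₂ _ _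

lemma wedgePairing_apply {k l : ℕ} (b : Basis (Fin (k + l)) R M) (x : ⋀[R]^k M) (y : ⋀[R]^l M) :
    wedgePairing b x y = volumeCoeff b (x * y) :=
  rfl

lemma wedgePairing_isSymm {k : ℕ} (hk : Even k) (b : Basis (Fin (k + k)) R M) :
    LinearMap.BilinForm.IsSymm (wedgePairing b) := by
  refine ⟨fun x y => ?_⟩
  have hcomm := (Subalgebra.mem_center_iff (R := R)).1 (exteriorPower_le_center hk y.2) x
  rw [wedgePairing_apply, wedgePairing_apply, hcomm]

lemma wedgePairing_map {k l : ℕ} (b : Basis (Fin (k + l)) R M) (f : Module.End R M)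
    (x : ⋀[R]^k M) (y : ⋀[R]^l M) :
    wedgePairing b (exteriorPower.map k f x) (exteriorPower.map l f y) =
      LinearMap.det f * wedgePairing b x y := by
  rw [wedgePairing_apply, wedgePairing_apply, ← volumeCoeff_map, coe_exteriorPower_map,
    coe_exteriorPower_map, map_mul (ExteriorAlgebra.map f)]

lemma isUnit_wedgePairing_ιMulti_family {k l : ℕ} (b : Basis (Fin (k + l)) R M)
    {s : Set.powersetCard (Fin (k + l)) k} {t : Set.powersetCard (Fin (k + l)) l}
    (hst : Disjoint s.val t.val) :
    IsUnit (wedgePairing b (exteriorPower.ιMulti_family R k b s)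
      (exteriorPower.ιMulti_family R l b t)) := by
  let i := Set.powersetCard.ofFinEmbEquiv.symm s
  let j := Set.powersetCard.ofFinEmbEquiv.symm t
  have hinj : Function.Injective (Fin.append i j) := by
    refine Fin.append_injective_iff.2 ⟨i.injective, j.injective, fun p q hpq => ?_⟩
    exact Finset.disjoint_left.1 hst
      ((Set.powersetCard.mem_range_ofFinEmbEquiv_symm_iff_mem s _).1 ⟨p, rfl⟩)
      ((Set.powersetCard.mem_range_ofFinEmbEquiv_symm_iff_mem t _).1 ⟨q, hpq.symm⟩)
  let e := Equiv.ofBijective _ (Finite.injective_iff_bijective.1 hinj)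
  have happend : Fin.append (b ∘ i) (b ∘ j) = b.reindex e.symm := by
    ext p
    refine Fin.addCases (fun q => ?_) (fun q => ?_) p <;> simp [e]
  rw [wedgePairing_apply, exteriorPower.ιMulti_family_apply_coe,
    exteriorPower.ιMulti_family_apply_coe, ExteriorAlgebra.ιMulti_family,
    ExteriorAlgebra.ιMulti_family, ιMulti_mul_ιMulti, volumeCoeff_ιMulti, happend]
  exact b.isUnit_det _

lemma wedgePairing_separatingLeft {k l : ℕ} (b : Basis (Fin (k + l)) R M) :
    (wedgePairing b).SeparatingLeft := by
  intro x hx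
  refine (b.exteriorPower k).ext_elem fun s => ?_
  let t := Set.powersetCard.compl (m := l) (by simp [add_comm]) s
  have hdisj : Disjoint s.val t.val := disjoint_compl_right
  have hzero : ∀ u, u ≠ s → wedgePairing b (exteriorPower.ιMulti_family R k b u)
      (exteriorPower.ιMulti_family R l b t) = 0 := by
    intro u hu
    have hut : ¬Disjoint u.val t.val := fun h =>
      hu (Set.powersetCard.eq_iff_subset.2 (disjoint_compl_right_iff.1 h))
    rw [wedgePairing_apply, exteriorPower.ιMulti_family_apply_coe,
      exteriorPower.ιMulti_family_apply_coe, ιMulti_family_mul_of_not_disjoint R b u t hut,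
      map_zero]
  have h := hx (exteriorPower.ιMulti_family R l b t)
  rw [← (b.exteriorPower k).sum_repr x, map_sum, LinearMap.sum_apply,
    Finset.sum_eq_single s (fun u _ hu => by simp [hzero u hu]) (by simp),
    map_smul, LinearMap.smul_apply, exteriorPower.basis_apply, smul_eq_mul,
    (isUnit_wedgePairing_ιMulti_family b hdisj).mul_left_eq_zero] at h
  simpa using h

theorem even_finrank_ker_exteriorPower_map_sub_id [IsDomain R] [IsPrincipalIdealRing R]
    (hR : ringChar R ≠ 2) {k : ℕ} (hk : Even k) (hk0 : k ≠ 0) (b : Basis (Fin (k + k)) R M)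
    {g : Module.End R M} (hg : LinearMap.det g = 1)
    (hkg : LinearMap.det (exteriorPower.map k g) = 1) :
    Even (finrank R (LinearMap.ker (exteriorPower.map k g - LinearMap.id))) := by
  have : Module.Free R M := .of_basis b
  have : Module.Finite R M := .of_basis b
  have hisom (x y : ⋀[R]^k M) :
      wedgePairing b (exteriorPower.map k g x) (exteriorPower.map k g y) = wedgePairing b x y := by
    rw [wedgePairing_map, hg, one_mul]
  have hrank : Even (finrank R (⋀[R]^k M)) := by
    rw [exteriorPower.finrank_eq, finrank_eq_card_basis b, Fintype.card_fin, ← two_mul,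
      ← Nat.centralBinom_eq_two_mul_choose]
    exact even_iff_two_dvd.2 (Nat.two_dvd_centralBinom_of_one_le (Nat.pos_of_ne_zero hk0))
  exact (even_finrank_iff_even_finrank_ker_of_det_eq_one hR (wedgePairing_separatingLeft b)
    (wedgePairing_isSymm hk b) hisom hkg).1 hrank

end WedgeForm

section Positivity

variable {K R : Type*} [Field K] [NeZero (2 : K)] [Semiring R] [LinearOrder R] [ExistsAddOfLE R]
  [PosMulMono R] [AddLeftMono R]

lemma isSquare_transvection {n : Type*} [Fintype n] [DecidableEq n] {i j : n} (hij : i ≠ j)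
    (c : K) : IsSquare (Matrix.transvection i j c) :=
  ⟨Matrix.transvection i j (c / 2), by
    rw [Matrix.transvection_mul_transvection_same _ _ hij, add_halves]⟩

lemma map_matrix_nonneg (hK : ∀ x : K, IsSquare x) {n : Type*} [Fintype n] [DecidableEq n]
    (φ : Matrix n n K →* R) (A : Matrix n n K) : 0 ≤ φ A := by
  refine Matrix.diagonal_transvection_induction (fun A => 0 ≤ φ A) A ?_ ?_ ?_
  · intro D _
    choose r hr using fun i => hK (D i)
    have hD : IsSquare (Matrix.diagonal D) :=
      ⟨Matrix.diagonal r, by rw [Matrix.diagonal_mul_diagonal, funext hr]⟩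
    exact (hD.map φ).nonneg
  · exact fun t => ((isSquare_transvection t.hij t.c).map φ).nonneg
  · intro A B hA hB
    rw [map_mul]
    exact mul_nonneg hA hB

theorem map_end_nonneg (hK : ∀ x : K, IsSquare x) {V : Type*} [AddCommGroup V] [Module K V]
    [Module.Finite K V] (φ : Module.End K V →* R) (f : Module.End K V) : 0 ≤ φ f := by
  let e := LinearMap.toMatrixAlgEquiv (Module.finBasis K V)
  have h := map_matrix_nonneg hK (φ.comp (e.symm : _ →* Module.End K V)) (e f)
  simpa using h

end Positivity

section ExteriorPowerDeterminant

/-- The action of endomorphisms of `M` on `⋀ⁿM`, as a monoid homomorphism. -/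
def exteriorPowerMapHom (R M : Type*) [CommRing R] [AddCommGroup M] [Module R M] (n : ℕ) :
    Module.End R M →* Module.End R (⋀[R]^n M) where
  toFun := exteriorPower.map n
  map_one' := exteriorPower.map_id
  map_mul' f g := exteriorPower.map_comp g f

lemma toMatrix_exteriorPower_map {R M I : Type*} [CommRing R] [AddCommGroup M] [Module R M]
    [LinearOrder I] [Fintype I] (b : Basis I R M) (n : ℕ) (f : Module.End R M)
    (s t : Set.powersetCard I n) :
    LinearMap.toMatrix (b.exteriorPower n) (b.exteriorPower n) (exteriorPower.map n f) s t =
      ((LinearMap.toMatrix b b f).submatrix (Set.powersetCard.ofFinEmbEquiv.symm s)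
        (Set.powersetCard.ofFinEmbEquiv.symm t)).det := by
  rw [LinearMap.toMatrix_apply, exteriorPower.basis_apply, exteriorPower.map_apply_ιMulti_family,
    exteriorPower.basis_repr_apply, exteriorPower.ιMulti_family,
    exteriorPower.ιMultiDual_apply_ιMulti, ← Matrix.det_transpose]
  congr 1
  ext i j
  simp [LinearMap.toMatrix_apply]

section Lattice

variable {R S V I : Type*} [CommRing R] [IsDomain R] [CommRing S] [Nontrivial S] [Algebra R S]
  [IsTorsionFree R S] [AddCommGroup V] [Module R V] [Module S V] [IsScalarTower R S V]
  (b : Basis I S V) {f : Module.End S V}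
  {g : Module.End R (Submodule.span R (Set.range b))}

lemma map_toMatrix_restrictScalars [Fintype I] [DecidableEq I] (hg : ∀ x, (g x : V) = f x) :
    (LinearMap.toMatrix (b.restrictScalars R) (b.restrictScalars R) g).map (algebraMap R S) =
      LinearMap.toMatrix b b f := by
  ext i j
  simp only [Matrix.map_apply, LinearMap.toMatrix_apply, Basis.restrictScalars_repr_apply, hg,
    Basis.restrictScalars_apply]

lemma algebraMap_det_of_coe_apply_eq [Finite I] (hg : ∀ x, (g x : V) = f x) :
    algebraMap R S (LinearMap.det g) = LinearMap.det f := by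
  have := Fintype.ofFinite I
  classical
  rw [← LinearMap.det_toMatrix (b.restrictScalars R), ← LinearMap.det_toMatrix b, RingHom.map_det,
    RingHom.mapMatrix_apply, map_toMatrix_restrictScalars b hg]

lemma algebraMap_det_exteriorPower_map_of_coe_apply_eq [LinearOrder I] [Finite I]
    (hg : ∀ x, (g x : V) = f x) (n : ℕ) :
    algebraMap R S (LinearMap.det (exteriorPower.map n g)) =
      LinearMap.det (exteriorPower.map n f) := by
  have := Fintype.ofFinite I
  rw [← LinearMap.det_toMatrix ((b.restrictScalars R).exteriorPower n),
    ← LinearMap.det_toMatrix (b.exteriorPower n), RingHom.map_det]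
  congr 1
  ext s t
  rw [RingHom.mapMatrix_apply, Matrix.map_apply, toMatrix_exteriorPower_map,
    toMatrix_exteriorPower_map, RingHom.map_det, RingHom.mapMatrix_apply, ← Matrix.submatrix_map,
    map_toMatrix_restrictScalars b hg]

end Lattice

end ExteriorPowerDeterminant

section ComplexLinear

lemma eq_one_of_isUnit_of_cast_nonneg {n : ℤ} (hn : IsUnit n) (h0 : 0 ≤ (n : ℝ)) : n = 1 :=
  (abs_of_nonneg (Int.cast_nonneg_iff.1 h0)).symm.trans (Int.isUnit_iff_abs_eq.1 hn)

variable {V I : Type*} [AddCommGroup V] [Module ℂ V] [Module ℝ V] [IsScalarTower ℝ ℂ V]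

/-- Restriction of scalars from `ℂ` to `ℝ` on endomorphisms, as a monoid homomorphism. -/
def endRestrictScalarsHom (V : Type*) [AddCommGroup V] [Module ℂ V] [Module ℝ V]
    [IsScalarTower ℝ ℂ V] :
    Module.End ℂ V →* Module.End ℝ V where
  toFun := LinearMap.restrictScalars ℝ
  map_one' := rfl
  map_mul' _ _ := rfl

lemma map_endRestrictScalarsHom_nonneg [Module.Finite ℝ V] (φ : Module.End ℝ V →* ℝ)
    (σ : Module.End ℂ V) : 0 ≤ φ (endRestrictScalarsHom V σ) :=
  have : Module.Finite ℂ V := .of_restrictScalars_finite ℝ ℂ V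
  map_end_nonneg (fun z => IsAlgClosed.exists_eq_mul_self z) (φ.comp (endRestrictScalarsHom V)) σ

variable (b : Basis I ℝ V) {σ : Module.End ℂ V}
  {g : Submodule.span ℤ (Set.range b) ≃ₗ[ℤ] Submodule.span ℤ (Set.range b)}

lemma det_eq_one_of_coe_apply_eq [Finite I] (hg : ∀ x, (g x : V) = σ x) :
    LinearMap.det g.toLinearMap = 1 := by
  have : Module.Finite ℝ V := .of_basis b
  refine eq_one_of_isUnit_of_cast_nonneg g.isUnit_det' ?_
  rw [← eq_intCast (algebraMap ℤ ℝ),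
    algebraMap_det_of_coe_apply_eq b (f := endRestrictScalarsHom V σ) hg]
  exact map_endRestrictScalarsHom_nonneg LinearMap.det σ

lemma det_exteriorPower_map_eq_one_of_coe_apply_eq [LinearOrder I] [Finite I]
    (hg : ∀ x, (g x : V) = σ x) (n : ℕ) :
    LinearMap.det (exteriorPower.map n g.toLinearMap) = 1 := by
  have : Module.Finite ℝ V := .of_basis b
  refine eq_one_of_isUnit_of_cast_nonneg ?_ ?_
  · exact (((Module.End.isUnit_iff _).2 g.bijective).map
      (exteriorPowerMapHom ℤ _ n)).map LinearMap.det
  · rw [← eq_intCast (algebraMap ℤ ℝ),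
      algebraMap_det_exteriorPower_map_of_coe_apply_eq b (f := endRestrictScalarsHom V σ) hg]
    exact map_endRestrictScalarsHom_nonneg (LinearMap.det.comp (exteriorPowerMapHom ℝ V n)) σ

end ComplexLinear

theorem stmt_3_general {V : Type*} [AddCommGroup V] [Module ℂ V] [Module ℝ V]
    [IsScalarTower ℝ ℂ V] {k : ℕ} (hk : Even k) (hk0 : k ≠ 0) (b : Basis (Fin (k + k)) ℝ V)
    (σ : Module.End ℂ V)
    (g : Submodule.span ℤ (Set.range b) ≃ₗ[ℤ] Submodule.span ℤ (Set.range b))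
    (hg : ∀ x, (g x : V) = σ x) :
    Even (finrank ℤ (LinearMap.ker (exteriorPower.map k g.toLinearMap - LinearMap.id))) :=
  even_finrank_ker_exteriorPower_map_sub_id (by simp [ringChar.eq_zero]) hk hk0
    (b.restrictScalars ℤ) (det_eq_one_of_coe_apply_eq b hg)
    (det_exteriorPower_map_eq_one_of_coe_apply_eq b hg k)

/-- If `Λ` is a `ℤ`-lattice in `ℂ²` and `σ` is a `ℂ`-linear automorphism of `ℂ²` of finite
order with `σ(Λ) = Λ`, such that `⋀²(σ|_Λ)` has prime order `p`, then the fixed submodule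
`T = {x ∈ ⋀²Λ : ⋀²(σ|_Λ)(x) = x}` has even rank. -/
theorem stmt_3 (Λ : Submodule ℤ (ℂ × ℂ)) (hΛ : IsComplexTorusLattice Λ)
    (σ : (ℂ × ℂ) ≃ₗ[ℂ] (ℂ × ℂ)) (hord : IsOfFinOrder σ) (hσΛ : PreservesLattice σ Λ)
    (p : ℕ) (hp : p.Prime) (hordp : orderOf (extSq σ Λ hσΛ) = p) :
    Even (Module.finrank ℤ ↥(invLat σ Λ hσΛ)) := by
  obtain ⟨b, rfl⟩ := hΛ
  rw [invLat, extSq, extPowMap_eq_map]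
  exact stmt_3_general (k := 2) even_two two_ne_zero b σ (latRestrict σ _ hσΛ) fun _ => rfl
end
end

section
/- Let Λ be a ℤ-lattice in ℂ² and let σ be a ℂ-linear automorphism of ℂ² of finite order d with σ(Λ) = Λ. If σ is symplectic, i.e. det_ℂ σ = 1, then d ∈ {1, 2, 3, 4, 6}. -/
set_option synthInstance.maxHeartbeats 1000000
set_option maxHeartbeats 1000000

open ExteriorAlgebra Module

noncomputable section

/-!
Every eigenvalue `α` of `σ` is a root of unity, and since `σ` has determinant one on a plane,
`tr σ = α + α⁻¹ = 2 Re α` is real with `|tr σ| ≤ 2`. By Cayley–Hamilton `tr σ = σ + σ⁻¹`, so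
`tr σ` is a real multiplier of the lattice; it is an integer, because the real multiples of a
nonzero lattice vector that lie in the lattice form an infinite cyclic group. This leaves five
characteristic polynomials `X ^ 2 - n X + 1`: those with `n = 2` and `n = -2` have a double root,
which a finite-order (hence semisimple) `σ` can only have as a scalar, and the other three are
cyclotomic.
-/

section FiniteOrder

open Polynomial

variable {K A : Type*} [Field K] [CharZero K] [Ring A] [Algebra K A] {a : A}

lemma squarefree_minpoly_of_isOfFinOrder (ha : IsOfFinOrder a) :
    Squarefree (minpoly K a) := by
  have hsep : (X ^ orderOf a - 1 : K[X]).Separable :=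
    X_pow_sub_one_separable_iff.mpr (Nat.cast_ne_zero.mpr ha.orderOf_pos.ne')
  refine hsep.squarefree.squarefree_of_dvd (minpoly.dvd K a ?_)
  simp [pow_orderOf_eq_one]

lemma aeval_eq_zero_of_aeval_pow_eq_zero (ha : IsOfFinOrder a) {p : K[X]} {n : ℕ}
    (hp : aeval a (p ^ n) = 0) : aeval a p = 0 := by
  rcases eq_or_ne n 0 with rfl | hn
  · have : Subsingleton A := subsingleton_of_zero_eq_one (by simpa using hp.symm)
    exact Subsingleton.elim _ _
  · rw [← minpoly.dvd_iff] at hp ⊢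
    exact ((squarefree_minpoly_of_isOfFinOrder ha).dvd_pow_iff_dvd hn).mp hp

lemma pow_four_or_pow_six_eq_one [Algebra ℚ A] (ha : IsOfFinOrder a) {n : ℤ} (hn : |n| ≤ 2)
    (h : a ^ 2 - n • a + 1 = 0) : a ^ 4 = 1 ∨ a ^ 6 = 1 := by
  obtain ⟨hlo, hhi⟩ := abs_le.mp hn
  interval_cases n
  · left
    have hroot : aeval a (X + 1 : ℚ[X]) = 0 := by
      refine aeval_eq_zero_of_aeval_pow_eq_zero ha (n := 2) ?_
      rw [map_pow, map_add, aeval_X, map_one, ← h]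
      noncomm_ring
    have hneg : a = -1 :=
      eq_neg_of_add_eq_zero_left (by rwa [map_add, aeval_X, map_one] at hroot)
    norm_num [hneg]
  · right
    have hfactor : a ^ 6 - 1 = (a ^ 2 - (-1 : ℤ) • a + 1) * (a ^ 4 - a ^ 3 + a - 1) := by
      noncomm_ring
    rwa [h, zero_mul, sub_eq_zero] at hfactor
  · left
    rw [zero_smul, sub_zero] at h
    have hfactor : a ^ 4 - 1 = (a ^ 2 + 1) * (a ^ 2 - 1) := by noncomm_ring
    rwa [h, zero_mul, sub_eq_zero] at hfactor
  · right
    have hfactor : a ^ 6 - 1 = (a ^ 2 - (1 : ℤ) • a + 1) * (a ^ 4 + a ^ 3 - a - 1) := by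
      noncomm_ring
    rwa [h, zero_mul, sub_eq_zero] at hfactor
  · left
    have hroot : aeval a (X - 1 : ℚ[X]) = 0 := by
      refine aeval_eq_zero_of_aeval_pow_eq_zero ha (n := 2) ?_
      rw [map_pow, map_sub, aeval_X, map_one, ← h]
      noncomm_ring
    have hone : a = 1 := sub_eq_zero.mp (by rwa [map_sub, aeval_X, map_one] at hroot)
    rw [hone, one_pow]

end FiniteOrder

section Plane

open Polynomial

variable {R M : Type*} [CommRing R] [Nontrivial R] [AddCommGroup M] [Module R M] [Module.Free R M]
  [Module.Finite R M]

lemma charpoly_eq_of_finrank_eq_two (hM : finrank R M = 2) (f : Module.End R M) :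
    f.charpoly = X ^ 2 - C (LinearMap.trace R M f) * X + C (LinearMap.det f) := by
  let b := finBasisOfFinrankEq R M hM
  rw [← LinearMap.charpoly_toMatrix f b, Matrix.charpoly_fin_two,
    LinearMap.trace_eq_matrix_trace R b, LinearMap.det_toMatrix]

lemma sq_sub_trace_smul_add_det_smul_eq_zero (hM : finrank R M = 2) (f : Module.End R M) :
    f ^ 2 - LinearMap.trace R M f • f + LinearMap.det f • 1 = 0 := by
  simpa [charpoly_eq_of_finrank_eq_two hM, Algebra.smul_def] using f.aeval_self_charpoly

lemma trace_smul_mem_of_mapsTo (hM : finrank R M = 2) {Λ : AddSubgroup M} {f : Module.End R M}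
    (hfΛ : Set.MapsTo f Λ Λ) (hf : IsOfFinOrder f) (hdet : LinearMap.det f = 1) {v : M}
    (hv : v ∈ Λ) : LinearMap.trace R M f • v ∈ Λ := by
  obtain ⟨d, hd, hfd⟩ := isOfFinOrder_iff_pow_eq_one.mp hf
  obtain ⟨w, hw, rfl⟩ : ∃ w ∈ Λ, f w = v := by
    refine ⟨(f ^ (d - 1)) v, ?_, ?_⟩
    · rw [Module.End.coe_pow]
      exact hfΛ.iterate _ hv
    · rw [← Module.End.mul_apply, mul_pow_sub_one hd.ne', hfd, Module.End.one_apply]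
  have hCH := LinearMap.congr_fun (sq_sub_trace_smul_add_det_smul_eq_zero hM f) w
  have htrace : LinearMap.trace R M f • f w = f (f w) + w := by
    simp only [hdet, sq, one_smul, LinearMap.add_apply, LinearMap.sub_apply, LinearMap.smul_apply,
      Module.End.mul_apply, Module.End.one_apply, LinearMap.zero_apply] at hCH
    rw [← sub_eq_zero, ← neg_eq_zero, ← hCH]
    abel
  rw [htrace]
  exact Λ.add_mem (hfΛ (hfΛ hw)) hw

end Plane

lemma isOfFinOrder_of_hasEigenvalue {R M : Type*} [CommRing R] [IsDomain R] [AddCommGroup M]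
    [Module R M] [Module.IsTorsionFree R M] {f : Module.End R M} (hf : IsOfFinOrder f) {μ : R}
    (hμ : f.HasEigenvalue μ) : IsOfFinOrder μ := by
  obtain ⟨v, hv⟩ := hμ.exists_hasEigenvector
  obtain ⟨n, hn, hfn⟩ := isOfFinOrder_iff_pow_eq_one.mp hf
  refine isOfFinOrder_iff_pow_eq_one.mpr ⟨n, hn, smul_left_injective R hv.2 ?_⟩
  simp only [← hv.pow_apply, hfn, Module.End.one_apply, one_smul]

lemma exists_real_trace_eq_abs_le_two {V : Type*} [AddCommGroup V] [Module ℂ V]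
    (hV : finrank ℂ V = 2) {f : Module.End ℂ V} (hf : IsOfFinOrder f) (hdet : LinearMap.det f = 1) :
    ∃ r : ℝ, LinearMap.trace ℂ V f = r ∧ |r| ≤ 2 := by
  have : FiniteDimensional ℂ V := .of_finrank_pos (by lia)
  have : Nontrivial V := nontrivial_of_finrank_pos (R := ℂ) (by lia)
  obtain ⟨α, hα⟩ := f.exists_eigenvalue
  have hnorm : ‖α‖ = 1 := (isOfFinOrder_of_hasEigenvalue hf hα).norm_eq_one
  have hquad : α ^ 2 - LinearMap.trace ℂ V f * α + 1 = 0 := by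
    simpa [charpoly_eq_of_finrank_eq_two hV, hdet] using
      (f.hasEigenvalue_iff_isRoot_charpoly α).mp hα
  have hconj : α * (starRingEnd ℂ) α = 1 := by simp [Complex.mul_conj', hnorm]
  refine ⟨2 * α.re, ?_, ?_⟩
  · rw [← Complex.add_conj]
    have hα0 : α ≠ 0 := norm_ne_zero_iff.mp (by simp [hnorm])
    apply mul_left_cancel₀ hα0
    linear_combination -hquad - hconj
  · rw [abs_mul, abs_two]
    linarith [Complex.abs_re_le_norm α]

lemma exists_int_eq_of_smul_mem {V : Type*} [AddCommGroup V] [Module ℝ V] [TopologicalSpace V]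
    [ContinuousSMul ℝ V] {Λ : AddSubgroup V} [DiscreteTopology Λ] (hΛ : Λ ≠ ⊥) {r : ℝ}
    (hr : ∀ v ∈ Λ, r • v ∈ Λ) : ∃ n : ℤ, r = n := by
  obtain ⟨v, hv, hv0⟩ := Λ.bot_or_exists_ne_zero.resolve_left hΛ
  let G : AddSubgroup ℝ := Λ.comap (LinearMap.toSpanSingleton ℝ V v).toAddMonoidHom
  have : DiscreteTopology G :=
    DiscreteTopology.preimage_of_continuous_injective (Λ : Set V)
      (continuous_id.smul continuous_const) (smul_left_injective ℝ hv0)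
  obtain ⟨g, hg⟩ := (AddSubgroup.isAddCyclic_iff_exists_zmultiples_eq_top G).mp
    (AddSubgroup.discrete_iff_addCyclic.mpr this)
  have mem_iff {x : ℝ} : x • v ∈ Λ ↔ ∃ n : ℤ, n • g = x := by
    rw [← AddSubgroup.mem_zmultiples_iff, hg]
    rfl
  have hg0 : g ≠ 0 := by
    rintro rfl
    obtain ⟨n, hn⟩ := mem_iff.mp (by rwa [one_smul])
    simp at hn
  obtain ⟨n, hn⟩ : ∃ n : ℤ, n • g = r * g := by
    rw [← mem_iff, mul_smul]
    exact hr _ (mem_iff.mpr ⟨1, one_zsmul g⟩)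
  exact ⟨n, mul_right_cancel₀ hg0 (by rw [← hn, zsmul_eq_mul])⟩

theorem stmt_4_general {V : Type*} [AddCommGroup V] [Module ℂ V] [TopologicalSpace V]
    [ContinuousSMul ℂ V] (hV : finrank ℂ V = 2) {Λ : AddSubgroup V} [DiscreteTopology Λ]
    (hΛ : Λ ≠ ⊥) {f : Module.End ℂ V} (hfΛ : Set.MapsTo f Λ Λ) (hf : IsOfFinOrder f)
    (hdet : LinearMap.det f = 1) : orderOf f ∈ ({1, 2, 3, 4, 6} : Set ℕ) := by
  have : FiniteDimensional ℂ V := .of_finrank_pos (by lia)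
  have : ContinuousSMul ℝ V := IsScalarTower.continuousSMul ℂ
  obtain ⟨r, htr, hr⟩ := exists_real_trace_eq_abs_le_two hV hf hdet
  obtain ⟨n, rfl⟩ : ∃ n : ℤ, r = n := by
    refine exists_int_eq_of_smul_mem hΛ fun v hv ↦ ?_
    rw [← Complex.coe_smul, ← htr]
    exact trace_smul_mem_of_mapsTo hV hfΛ hf hdet hv
  have hquad : f ^ 2 - n • f + 1 = 0 := by
    simpa [htr, hdet, Int.cast_smul_eq_zsmul] using sq_sub_trace_smul_add_det_smul_eq_zero hV f
  have hdvd : orderOf f ∈ Nat.divisors 4 ∪ Nat.divisors 6 := by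
    have : Algebra ℚ (Module.End ℂ V) := Algebra.compHom _ (algebraMap ℚ ℂ)
    simpa [orderOf_dvd_iff_pow_eq_one] using pow_four_or_pow_six_eq_one hf (mod_cast hr) hquad
  have hdivisors : Nat.divisors 4 ∪ Nat.divisors 6 = {1, 2, 3, 4, 6} := by decide
  simpa [hdivisors] using hdvd

/-- If `Λ` is a `ℤ`-lattice in `ℂ²` and `σ` is a `ℂ`-linear automorphism of `ℂ²` of finite
order `d` with `σ(Λ) = Λ` which is symplectic, i.e. `det_ℂ σ = 1`, then
`d ∈ {1, 2, 3, 4, 6}`. -/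
theorem stmt_4 (Λ : Submodule ℤ (ℂ × ℂ)) (hΛ : IsComplexTorusLattice Λ)
    (σ : (ℂ × ℂ) ≃ₗ[ℂ] (ℂ × ℂ)) (hσΛ : PreservesLattice σ Λ)
    (d : ℕ) (hord : orderOf σ = d) (hd0 : 0 < d)
    (hsymp : LinearMap.det (σ : (ℂ × ℂ) →ₗ[ℂ] (ℂ × ℂ)) = 1) :
    d ∈ ({1, 2, 3, 4, 6} : Set ℕ) := by
  have hf : IsOfFinOrder σ := orderOf_pos_iff.mp (hord ▸ hd0)
  obtain ⟨b, rfl⟩ := hΛ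
  have hΛ0 : (Submodule.span ℤ (Set.range b)).toAddSubgroup ≠ ⊥ := fun h ↦
    b.ne_zero 0 (AddSubgroup.mem_bot.mp (h ▸ Submodule.subset_span (Set.mem_range_self 0)))
  let φ := LinearEquiv.automorphismGroup.toLinearMapMonoidHom (R := ℂ) (M := ℂ × ℂ)
  have hφ : Function.Injective φ := LinearEquiv.toLinearMap_injective
  rw [← hord, ← orderOf_injective φ hφ σ]
  exact stmt_4_general (by simp) hΛ0 (f := φ σ) (fun v hv ↦ hσΛ.le ⟨v, hv, rfl⟩)
    (φ.isOfFinOrder hf) hsymp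
end
end

section
/- Let r ≥ 2, a ≥ 0 be integers and δ ∈ {0,1}. There exists an even hyperbolic 2-elementary Gram matrix M ∈ M_r(ℤ) of length a with δ(M) = δ if and only if all of the following hold: a ≤ r; r ≡ a (mod 2); if δ = 0 then r ≡ 2 (mod 4); if a = 0 then δ = 0; if a ≤ 1 then r ≡ 2 + a (mod 8) or r ≡ 2 − a (mod 8); if a = 2 and r ≡ 6 (mod 8) then δ = 0; and if δ = 0 and a = r then r ≡ 2 (mod 8). -/
open Matrix

/-- `M` is the Gram matrix of a hyperbolic lattice, i.e. of signature `(1, r-1)`: over `ℝ`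
it is congruent to `diag(1, -1, …, -1)`. -/
def IsHyperbolicGram {r : ℕ} (M : Matrix (Fin r) (Fin r) ℤ) : Prop :=
  ∃ P : Matrix (Fin r) (Fin r) ℝ, IsUnit P.det ∧
    Pᵀ * (M.map (Int.cast : ℤ → ℝ)) * P =
      Matrix.diagonal (fun i : Fin r => if (i : ℕ) = 0 then (1 : ℝ) else -1)

/-- `M` is `q`-elementary of length `a`: the cokernel of `M : ℤ^r → ℤ^r` is isomorphic to
`(ℤ/qℤ)^a`. -/
def ElemOfLength {r : ℕ} (q a : ℕ) (M : Matrix (Fin r) (Fin r) ℤ) : Prop :=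
  Nonempty (((Fin r → ℤ) ⧸ LinearMap.range M.mulVecLin) ≃ₗ[ℤ] (Fin a → ZMod q))

/-- `δ(M) = 0`, i.e. `zᵀ M⁻¹ z ∈ ℤ` for every integer vector `z`. -/
def DeltaZero {r : ℕ} (M : Matrix (Fin r) (Fin r) ℤ) : Prop :=
  ∀ z : Fin r → ℤ, ∃ n : ℤ,
    (fun i => (z i : ℚ)) ⬝ᵥ ((M.map (Int.cast : ℤ → ℚ))⁻¹ *ᵥ fun i => (z i : ℚ)) = (n : ℚ)

/-!
For an even lattice `L` with Gram matrix `M`, the values `exp (π i q (x))` of the discriminant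
quadratic form `q` on `L* / L = coker M` add up to `√|det M| * exp (π i σ / 4)`, where `σ` is the
signature (Milgram's formula). Both sides are multiplied by `|det P|` when `M` is replaced by
`Pᵀ M P`, so `M` may be taken diagonal. The sum is then a product of quadratic Gauss sums, which are
computed from the two asymptotic expansions of the theta function at the cusp `1 / D`.

For a hyperbolic lattice `σ = 2 - r`, so whatever is known about the Gauss sum of a 2-elementary
form constrains `r` modulo `8`. It is a Gaussian integer of norm `2 ^ a`, real when `δ = 0`, and a
sum of at most four terms when `a ≤ 2`; for `δ = 0` and `a = r` the lattice is twice an even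
unimodular one. Conversely, orthogonal sums of `U`, `U(2)`, `⟨2⟩`, `-A₁`, `-D₄`, `-E₇`, `-E₈` and
`-E₈(2)` attain all the remaining triples.
-/

section QuadraticGaussSum

open Complex Filter Topology HurwitzZeta
open scoped Real

lemma tendsto_cosKernel_atTop (a : UnitAddCircle) : Tendsto (cosKernel a) atTop (𝓝 1) := by
  obtain ⟨p, hp, hO⟩ := isBigO_atTop_cosKernel_sub a
  have hexp : Tendsto (fun x : ℝ => Real.exp (-p * x)) atTop (𝓝 0) :=
    Real.tendsto_exp_atBot.comp (tendsto_id.const_mul_atTop_of_neg (neg_neg_of_pos hp))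
  simpa using (hO.trans_tendsto hexp).add_const 1

lemma tendsto_sqrt_mul_evenKernel (a : UnitAddCircle) :
    Tendsto (fun x => √x * evenKernel a x) (𝓝[>] 0) (𝓝 1) := by
  refine ((tendsto_cosKernel_atTop a).comp tendsto_inv_nhdsGT_zero).congr' ?_
  filter_upwards [self_mem_nhdsWithin] with x (hx : 0 < x)
  have : √x ≠ 0 := (Real.sqrt_pos.2 hx).ne'
  rw [evenKernel_functional_equation, ← Real.sqrt_eq_rpow, Function.comp_apply, one_div x]
  field_simp

lemma tendsto_jacobiTheta_comap_im_atTop : Tendsto jacobiTheta (comap im atTop) (𝓝 1) := by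
  have hexp : Tendsto (fun τ : ℂ => Real.exp (-π * τ.im)) (comap im atTop) (𝓝 0) :=
    Real.tendsto_exp_atBot.comp
      (tendsto_comap.const_mul_atTop_of_neg (neg_neg_of_pos Real.pi_pos))
  simpa using (isBigO_at_im_infty_jacobiTheta_sub_one.trans_tendsto hexp).add_const 1

lemma jacobiTheta_neg_inv {τ : ℂ} (hτ : 0 < τ.im) :
    jacobiTheta (-τ⁻¹) = (-I * τ) ^ (1 / 2 : ℂ) * jacobiTheta τ := by
  have h := jacobiTheta_S_smul ⟨τ, hτ⟩
  rwa [UpperHalfPlane.modular_S_smul, UpperHalfPlane.coe_mk, ← neg_inv] at h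

lemma jacobiTheta_even_int_add {k : ℤ} (hk : Even k) (τ : ℂ) :
    jacobiTheta (k + τ) = jacobiTheta τ := by
  obtain ⟨m, rfl⟩ := hk
  have hper : Function.Periodic jacobiTheta 2 := fun τ => by rw [add_comm, jacobiTheta_two_add]
  have := hper.int_mul m τ
  rw [← this, add_comm, Int.cast_add, ← mul_two]

lemma exp_residue_class_sq {D : ℕ} [NeZero D] (hD : Even D) (w : ℝ) (m : ℤ) (r : ℕ) :
    cexp (π * I * ((m * D + r : ℤ) : ℂ) ^ 2 * (1 / D + I * w)) =
      cexp (π * I * (r : ℂ) ^ 2 / D) * Real.exp (-π * (m + (r / D : ℝ)) ^ 2 * (D ^ 2 * w)) := by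
  obtain ⟨k, hk⟩ := hD
  have hD₀ : (D : ℂ) ≠ 0 := NeZero.ne _
  have hk' : (D : ℂ) = k + k := by exact_mod_cast hk
  rw [ofReal_exp, ← Complex.exp_add, Complex.exp_eq_exp_iff_exists_int]
  refine ⟨m * (m * k + r), ?_⟩
  push_cast
  field_simp
  linear_combination (w * (m * D + r) ^ 2 * D) * I_sq + I * m ^ 2 * D * hk'

lemma summable_jacobiTheta_term {τ : ℂ} (hτ : 0 < τ.im) :
    Summable fun n : ℤ => cexp (π * I * (n : ℂ) ^ 2 * τ) := by
  simpa [jacobiTheta₂_term] using (summable_jacobiTheta₂_term_iff 0 τ).2 hτ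

lemma jacobiTheta_one_div_add_I_mul {D : ℕ} [NeZero D] (hD : Even D) {w : ℝ} (hw : 0 < w) :
    jacobiTheta (1 / D + I * w) = ∑ r : Fin D, cexp (π * I * ((r : ℕ) : ℂ) ^ 2 / D) *
      evenKernel (((r : ℕ) / D : ℝ) : UnitAddCircle) (D ^ 2 * w) := by
  have him : 0 < (1 / D + I * w : ℂ).im := by
    rw [← ofReal_natCast, ← ofReal_one, ← ofReal_div]
    simpa only [add_im, ofReal_im, zero_add, I_mul_im, ofReal_re]
  have hpos : 0 < (D : ℝ) ^ 2 * w := mul_pos (pow_pos (by exact_mod_cast NeZero.pos D) 2) hw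
  obtain ⟨e, he⟩ : ∃ e : Fin D × ℤ ≃ ℤ, ∀ p, e p = p.2 * D + (p.1 : ℕ) :=
    ⟨(Equiv.prodComm _ _).trans (Int.divModEquiv D).symm,
      fun p => Int.divModEquiv_symm_apply D (p.2, p.1)⟩
  have hsum := e.summable_iff.2 (summable_jacobiTheta_term him)
  rw [jacobiTheta, ← e.tsum_eq]
  refine hsum.tsum_prod.trans ?_
  rw [tsum_fintype]
  refine Finset.sum_congr rfl fun r _ => ?_
  simp_rw [Function.comp_apply, he, exp_residue_class_sq hD, tsum_mul_left]
  rw [← ofReal_tsum, (hasSum_int_evenKernel _ hpos).tsum_eq]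

lemma tendsto_sqrt_mul_jacobiTheta_residue_sum {D : ℕ} [NeZero D] (hD : Even D) :
    Tendsto (fun w : ℝ => √w * jacobiTheta (1 / D + I * w)) (𝓝[>] 0)
      (𝓝 ((∑ r : Fin D, cexp (π * I * ((r : ℕ) : ℂ) ^ 2 / D)) / D)) := by
  have hD₀ : (0 : ℝ) < D := by exact_mod_cast NeZero.pos D
  have hscale : Tendsto (fun w : ℝ => (D : ℝ) ^ 2 * w) (𝓝[>] 0) (𝓝[>] 0) := by
    refine tendsto_nhdsWithin_iff.2 ⟨?_, ?_⟩
    · exact tendsto_nhdsWithin_of_tendsto_nhds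
        ((continuous_const_mul _).tendsto' 0 0 (mul_zero _))
    · filter_upwards [self_mem_nhdsWithin] with w (hw : 0 < w)
      exact mul_pos (pow_pos hD₀ 2) hw
  have hker (r : Fin D) :=
    ((tendsto_sqrt_mul_evenKernel (((r : ℕ) / D : ℝ) : UnitAddCircle)).comp hscale).ofReal
  have hlim := (tendsto_finsetSum Finset.univ fun r _ =>
    (hker r).const_mul (cexp (π * I * ((r : ℕ) : ℂ) ^ 2 / D))).div_const (D : ℂ)
  simp only [ofReal_one, mul_one] at hlim
  refine hlim.congr' ?_
  filter_upwards [self_mem_nhdsWithin] with w (hw : 0 < w)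
  rw [jacobiTheta_one_div_add_I_mul hD hw, Finset.mul_sum, Finset.sum_div]
  refine Finset.sum_congr rfl fun r _ => ?_
  have hD₁ : (D : ℂ) ≠ 0 := NeZero.ne _
  rw [Function.comp_apply, Real.sqrt_mul (by positivity), Real.sqrt_sq hD₀.le]
  push_cast
  field_simp

lemma ofReal_mul_cpow_one_half {x : ℝ} (hx : 0 < x) {z : ℂ} (hz : z ≠ 0) :
    ((x : ℂ) * z) ^ (1 / 2 : ℂ) = √x * z ^ (1 / 2 : ℂ) := by
  have hx' : (x : ℂ) ≠ 0 := by exact_mod_cast hx.ne'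
  have hsqrt : (√x : ℂ) = (x : ℂ) ^ (1 / 2 : ℂ) := by
    rw [Real.sqrt_eq_rpow, ofReal_cpow hx.le]
    norm_num
  rw [hsqrt, cpow_def_of_ne_zero (mul_ne_zero hx' hz), log_ofReal_mul hx hz, add_mul,
    Complex.exp_add, cpow_def_of_ne_zero hx', cpow_def_of_ne_zero hz, ofReal_log hx.le]

lemma cpow_mul_jacobiTheta_eq_of_inv_eq {k : ℤ} (hk : Even k) {τ ρ : ℂ} (hτ : 0 < τ.im)
    (hρ : 0 < ρ.im) (h : -τ⁻¹ = k + -ρ⁻¹) :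
    (-I * τ) ^ (1 / 2 : ℂ) * jacobiTheta τ = (-I * ρ) ^ (1 / 2 : ℂ) * jacobiTheta ρ := by
  rw [← jacobiTheta_neg_inv hτ, ← jacobiTheta_neg_inv hρ, h, jacobiTheta_even_int_add hk]

-- `S T ^ D S ∈ SL(2, ℤ)` moves the cusp `1 / D` to `∞`.
lemma sqrt_mul_jacobiTheta_one_div_add {D : ℕ} [NeZero D] (hD : Even D) {w : ℝ} (hw : 0 < w) :
    √w * jacobiTheta (1 / D + I * w) =
      ((-I * (1 / D + I * w)) ^ (1 / 2 : ℂ))⁻¹ * ((1 / D + I * w) / D) ^ (1 / 2 : ℂ) *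
        jacobiTheta (-(1 / D) + I * (1 / (D ^ 2 * w) : ℝ)) := by
  have hD₀ : (0 : ℝ) < D := by exact_mod_cast NeZero.pos D
  have hD₁ : (D : ℂ) ≠ 0 := NeZero.ne _
  have hw₁ : (w : ℂ) ≠ 0 := by exact_mod_cast hw.ne'
  set ρ : ℂ := -(1 / D) + I * (1 / (D ^ 2 * w) : ℝ) with hρ
  set τ : ℂ := 1 / D + I * w with hτ
  have hτim : 0 < τ.im := by simpa [hτ] using hw
  have hτ₀ : τ ≠ 0 := fun h => by simp [h] at hτim
  have hρim : 0 < ρ.im := by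
    rw [hρ, ← ofReal_natCast, ← ofReal_one, ← ofReal_div, ← ofReal_neg, add_im, ofReal_im,
      I_mul_im, ofReal_re, zero_add]
    positivity
  have hρτ : ρ = I * τ / (D * w) := by
    rw [hρ, hτ]; push_cast; field_simp; linear_combination -w * D * I_sq
  have hcusp : -τ⁻¹ = (-(D : ℤ) : ℤ) + -ρ⁻¹ := by
    rw [hρτ]; push_cast; field_simp; rw [hτ]; field_simp; linear_combination w * D * I_sq
  have hIρ : -I * ρ = (1 / w : ℝ) * (τ / D) := by
    rw [hρτ]; push_cast; field_simp; linear_combination -I_sq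
  have hmod := cpow_mul_jacobiTheta_eq_of_inv_eq (by simpa using hD) hτim hρim hcusp
  rw [hIρ, ofReal_mul_cpow_one_half (by positivity) (div_ne_zero hτ₀ hD₁),
    Real.sqrt_div zero_le_one, Real.sqrt_one] at hmod
  have hroot : (-I * τ) ^ (1 / 2 : ℂ) ≠ 0 := by simp [cpow_eq_zero_iff, hτ₀]
  have hsqrt : (√w : ℂ) ≠ 0 := by exact_mod_cast (Real.sqrt_pos.2 hw).ne'
  rw [eq_inv_mul_iff_mul_eq₀ hroot |>.2 hmod]
  push_cast
  field_simp

lemma inv_neg_I_cpow_one_half : ((-I) ^ (1 / 2 : ℂ))⁻¹ = cexp (π * I / 4) := by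
  rw [cpow_def_of_ne_zero (neg_ne_zero.2 I_ne_zero), log_neg_I, ← Complex.exp_neg]
  ring_nf

lemma tendsto_inv_cpow_mul_cpow_one_div_add (D : ℕ) [NeZero D] :
    Tendsto (fun w : ℝ => ((-I * (1 / D + I * w)) ^ (1 / 2 : ℂ))⁻¹ *
      ((1 / D + I * w) / D) ^ (1 / 2 : ℂ)) (𝓝[>] 0) (𝓝 (√D * cexp (π * I / 4) / D)) := by
  have hD₀ : (0 : ℝ) < D := by exact_mod_cast NeZero.pos D
  have hD₁ : (D : ℂ) ≠ 0 := NeZero.ne _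
  have hsqrt : (√D : ℂ) ≠ 0 := by exact_mod_cast (Real.sqrt_pos.2 hD₀).ne'
  have hτ : -I * (1 / D + I * (0 : ℝ)) = (1 / D : ℝ) * -I := by push_cast; ring
  have hρ : (1 / D + I * (0 : ℝ)) / D = ((1 / D ^ 2 : ℝ) : ℂ) * 1 := by
    push_cast
    field_simp
    rw [mul_zero, add_zero]
  have hcont : ContinuousAt (fun w : ℝ => ((-I * (1 / D + I * w)) ^ (1 / 2 : ℂ))⁻¹ *
      ((1 / D + I * w) / D) ^ (1 / 2 : ℂ)) 0 := by
    refine ContinuousAt.mul (ContinuousAt.inv₀ ?_ ?_) ?_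
    · refine ContinuousAt.cpow (by fun_prop) continuousAt_const ?_
      rw [hτ, mem_slitPlane_iff]
      exact Or.inr (by simpa using hD₀.ne')
    · rw [hτ]
      simp [cpow_eq_zero_iff, hD₁]
    · refine ContinuousAt.cpow (by fun_prop) continuousAt_const ?_
      rw [hρ, mul_one, ofReal_mem_slitPlane]
      positivity
  convert tendsto_nhdsWithin_of_tendsto_nhds hcont.tendsto using 2
  rw [hτ, hρ, ofReal_mul_cpow_one_half (by positivity) (neg_ne_zero.2 I_ne_zero),
    ofReal_mul_cpow_one_half (by positivity) one_ne_zero, one_cpow, mul_inv,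
    inv_neg_I_cpow_one_half, Real.sqrt_div zero_le_one, Real.sqrt_div zero_le_one, Real.sqrt_one,
    Real.sqrt_sq hD₀.le]
  push_cast
  field_simp

lemma sum_exp_sq_div {D : ℕ} [NeZero D] (hD : Even D) :
    ∑ r : Fin D, cexp (π * I * ((r : ℕ) : ℂ) ^ 2 / D) = √D * cexp (π * I / 4) := by
  have hD₀ : (0 : ℝ) < D := by exact_mod_cast NeZero.pos D
  have hD₁ : (D : ℂ) ≠ 0 := NeZero.ne _
  have him (w : ℝ) : (-(1 / D) + I * (1 / (D ^ 2 * w) : ℝ) : ℂ).im = ((D : ℝ) ^ 2)⁻¹ * w⁻¹ := by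
    rw [← ofReal_natCast, ← ofReal_one, ← ofReal_div, ← ofReal_neg, add_im, ofReal_im, I_mul_im,
      ofReal_re, zero_add, one_div, mul_inv]
  have hθ : Tendsto (fun w : ℝ => jacobiTheta (-(1 / D) + I * (1 / (D ^ 2 * w) : ℝ))) (𝓝[>] 0)
      (𝓝 1) := by
    refine tendsto_jacobiTheta_comap_im_atTop.comp (tendsto_comap_iff.2 ?_)
    simp only [Function.comp_def, him]
    exact tendsto_inv_nhdsGT_zero.const_mul_atTop (by positivity)
  have hlim := (tendsto_inv_cpow_mul_cpow_one_div_add D).mul hθ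
  rw [mul_one] at hlim
  refine (div_left_inj' hD₁).1 (tendsto_nhds_unique (tendsto_sqrt_mul_jacobiTheta_residue_sum hD)
    (hlim.congr' ?_))
  filter_upwards [self_mem_nhdsWithin] with w hw using
    (sqrt_mul_jacobiTheta_one_div_add hD hw).symm

end QuadraticGaussSum

section Cokernel

variable {ι : Type*} [Fintype ι]

/-- The cokernel of `M : ℤ^ι → ℤ^ι`; for a nondegenerate Gram matrix it is the discriminant group
of the lattice. -/
abbrev Coker (M : Matrix ι ι ℤ) : Type _ := (ι → ℤ) ⧸ LinearMap.range M.mulVecLin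

lemma Coker.mk_eq_mk_iff {M : Matrix ι ι ℤ} {x y : ι → ℤ} :
    (Submodule.Quotient.mk x : Coker M) = Submodule.Quotient.mk y ↔ ∃ z, x = y + M *ᵥ z := by
  rw [Submodule.Quotient.eq, LinearMap.mem_range]
  simp only [mulVecLin_apply, eq_sub_iff_add_eq', eq_comm]

/-- The map `Coker M → Coker N` induced by `A`, where `A * M = N * B`. -/
def Coker.map {M N : Matrix ι ι ℤ} (A B : Matrix ι ι ℤ) (h : A * M = N * B) :
    Coker M →ₗ[ℤ] Coker N :=
  Submodule.mapQ _ _ A.mulVecLin <| by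
    rintro _ ⟨z, rfl⟩
    exact ⟨B *ᵥ z, by simp [h]⟩

@[simp]
lemma Coker.map_mk {M N A B : Matrix ι ι ℤ} (h : A * M = N * B) (x : ι → ℤ) :
    Coker.map A B h (Submodule.Quotient.mk x) = Submodule.Quotient.mk (A *ᵥ x) :=
  Submodule.mapQ_apply ..

variable [DecidableEq ι]

lemma Coker.natCard_eq (M : Matrix ι ι ℤ) [NeZero M.det] : Nat.card (Coker M) = M.det.natAbs := by
  have hinj : Function.Injective M.mulVecLin := mulVec_injective_of_det_ne_zero (NeZero.ne M.det)
  rw [← Submodule.natAbs_det_equiv _ (LinearEquiv.ofInjective M.mulVecLin hinj),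
    ← LinearMap.det_toLin']
  congr

instance Coker.finite (M : Matrix ι ι ℤ) [NeZero M.det] : Finite (Coker M) :=
  Nat.finite_of_card_ne_zero <| by simpa [Coker.natCard_eq] using NeZero.ne M.det

noncomputable instance Coker.fintype (M : Matrix ι ι ℤ) [NeZero M.det] : Fintype (Coker M) :=
  Fintype.ofFinite _

instance neZero_det_mul (M N : Matrix ι ι ℤ) [NeZero M.det] [NeZero N.det] :
    NeZero (M * N).det :=
  ⟨by simp [NeZero.ne]⟩

instance neZero_det_transpose (M : Matrix ι ι ℤ) [NeZero M.det] : NeZero Mᵀ.det :=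
  ⟨by simp [NeZero.ne]⟩

end Cokernel

section DiscriminantForm

variable {ι : Type*} [Fintype ι]

lemma ratCast_mulVec (M : Matrix ι ι ℤ) (z : ι → ℤ) :
    (fun i => ((M *ᵥ z) i : ℚ)) = M.map (Int.cast : ℤ → ℚ) *ᵥ fun i => (z i : ℚ) :=
  funext fun i => RingHom.map_mulVec (Int.castRingHom ℚ) M z i

variable [DecidableEq ι]

/-- The `ℚ`-valued form `xᵀ M⁻¹ y` on `ℤ^ι`. For a Gram matrix `M` of a lattice `L` it is the
bilinear form of `L` on the dual lattice, in dual coordinates; for a general `M` it is the pairing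
of `ℤ^ι` with `ℤ^ι` that detects the range of `Mᵀ`. -/
noncomputable def discForm (M : Matrix ι ι ℤ) (x y : ι → ℤ) : ℚ :=
  (fun i => (x i : ℚ)) ⬝ᵥ ((M.map (Int.cast : ℤ → ℚ))⁻¹ *ᵥ fun i => (y i : ℚ))

lemma isUnit_det_map_intCast {K : Type*} [Field K] [CharZero K] (M : Matrix ι ι ℤ)
    [NeZero M.det] : IsUnit (M.map (Int.cast : ℤ → K)).det := by
  rw [← Int.cast_det]
  simp [NeZero.ne]

lemma discForm_add_left (M : Matrix ι ι ℤ) (x x' y : ι → ℤ) :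
    discForm M (x + x') y = discForm M x y + discForm M x' y := by
  rw [discForm, discForm, discForm, ← add_dotProduct]
  simp [Pi.add_def]

lemma discForm_add_right (M : Matrix ι ι ℤ) (x y y' : ι → ℤ) :
    discForm M x (y + y') = discForm M x y + discForm M x y' := by
  rw [discForm, discForm, discForm, ← dotProduct_add, ← mulVec_add]
  simp [Pi.add_def]

lemma discForm_mulVec_right (M : Matrix ι ι ℤ) [NeZero M.det] (x z : ι → ℤ) :
    discForm M x (M *ᵥ z) = (x ⬝ᵥ z : ℤ) := by
  rw [discForm, ratCast_mulVec, mulVec_mulVec, nonsing_inv_mul _ (isUnit_det_map_intCast M),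
    one_mulVec]
  exact (RingHom.map_dotProduct (Int.castRingHom ℚ) x z).symm

lemma discForm_comm {M : Matrix ι ι ℤ} (hM : M.IsSymm) (x y : ι → ℤ) :
    discForm M x y = discForm M y x := by
  have hsymm : ((M.map (Int.cast : ℤ → ℚ))⁻¹)ᵀ = (M.map (Int.cast : ℤ → ℚ))⁻¹ := by
    rw [transpose_nonsing_inv, ← transpose_map, hM.eq]
  rw [discForm, dotProduct_mulVec, ← mulVec_transpose, hsymm, dotProduct_comm, discForm]

lemma discForm_mul_mulVec (A M : Matrix ι ι ℤ) [NeZero A.det] (x y : ι → ℤ) :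
    discForm (A * M) x (A *ᵥ y) = discForm M x y := by
  rw [discForm, ratCast_mulVec, Matrix.map_mul_intCast, Matrix.mul_inv_rev, mulVec_mulVec,
    Matrix.mul_assoc, nonsing_inv_mul _ (isUnit_det_map_intCast A), Matrix.mul_one, discForm]

lemma discForm_mul_transpose_mulVec (M A : Matrix ι ι ℤ) [NeZero A.det] (x y : ι → ℤ) :
    discForm (M * A) (Aᵀ *ᵥ x) y = discForm M x y := by
  rw [discForm, ratCast_mulVec, Matrix.map_mul_intCast, Matrix.mul_inv_rev, transpose_map,
    mulVec_transpose, dotProduct_mulVec, vecMul_vecMul, ← Matrix.mul_assoc,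
    mul_nonsing_inv _ (isUnit_det_map_intCast A), Matrix.one_mul, ← dotProduct_mulVec, discForm]

lemma exists_eq_transpose_mulVec_of_discForm {A : Matrix ι ι ℤ} [NeZero A.det] {x : ι → ℤ}
    (hx : ∀ h, ∃ n : ℤ, discForm A x h = n) : ∃ y, x = Aᵀ *ᵥ y := by
  choose n hn using hx
  have hrow : (fun i => (x i : ℚ)) ᵥ* (A.map (Int.cast : ℤ → ℚ))⁻¹ =
      fun i => (n (Pi.single i 1) : ℚ) := by
    ext i
    rw [← hn, discForm, dotProduct_mulVec]
    simp [Pi.single_apply, dotProduct]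
  refine ⟨fun i => n (Pi.single i 1), funext fun i => Int.cast_injective (α := ℚ) ?_⟩
  have := congrFun (ratCast_mulVec Aᵀ fun i => n (Pi.single i 1)) i
  rw [this, ← hrow, transpose_map, mulVec_transpose, vecMul_vecMul,
    nonsing_inv_mul _ (isUnit_det_map_intCast A), vecMul_one]

end DiscriminantForm

section EvenGram

variable {ι : Type*}

/-- `M` is the Gram matrix of an even lattice. -/
structure IsEvenGram (M : Matrix ι ι ℤ) : Prop where
  isSymm : M.IsSymm
  even_diag : ∀ i, Even (M i i)

variable [Fintype ι]

lemma IsEvenGram.even_dotProduct_mulVec {M : Matrix ι ι ℤ} (hM : IsEvenGram M) (z : ι → ℤ) :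
    Even (z ⬝ᵥ M *ᵥ z) := by
  rw [← ZMod.intCast_eq_zero_iff_even]
  have hexpand : z ⬝ᵥ M *ᵥ z = ∑ p : ι × ι, z p.1 * (M p.1 p.2 * z p.2) := by
    simp only [dotProduct, mulVec, Finset.mul_sum, Fintype.sum_prod_type]
  rw [hexpand, Int.cast_sum]
  refine Finset.sum_involution (fun p _ => p.swap) ?_ ?_ (by simp) (by simp)
  · intro p _
    rw [Prod.fst_swap, Prod.snd_swap, hM.isSymm.apply p.1 p.2, ← Int.cast_add,
      ZMod.intCast_eq_zero_iff_even]
    exact ⟨z p.1 * (M p.1 p.2 * z p.2), by ring⟩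
  · rintro ⟨i, j⟩ - hne hswap
    obtain rfl : j = i := congrArg Prod.fst hswap
    exact hne ((ZMod.intCast_eq_zero_iff_even).2 (((hM.even_diag j).mul_right _).mul_left _))

lemma IsEvenGram.transpose_mul_mul {M : Matrix ι ι ℤ} (hM : IsEvenGram M) (P : Matrix ι ι ℤ) :
    IsEvenGram (Pᵀ * M * P) where
  isSymm := by
    rw [IsSymm, Matrix.transpose_mul, Matrix.transpose_mul, transpose_transpose, hM.isSymm.eq,
      Matrix.mul_assoc]
  even_diag i := by
    rw [Matrix.mul_assoc]
    exact hM.even_dotProduct_mulVec (P.col i)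

end EvenGram

section GaussSum

/-- The additive character `q ↦ exp(π i q)` of `ℚ`, whose kernel is `2ℤ`. -/
noncomputable def phase : AddChar ℚ ℂ where
  toFun q := Complex.exp (Real.pi * Complex.I * q)
  map_zero_eq_one' := by simp
  map_add_eq_mul' p q := by rw [← Complex.exp_add]; push_cast; ring_nf

lemma phase_apply (q : ℚ) : phase q = Complex.exp (Real.pi * Complex.I * q) := rfl

lemma phase_ne_zero (q : ℚ) : phase q ≠ 0 := Complex.exp_ne_zero _

lemma phase_eq_one_iff {q : ℚ} : phase q = 1 ↔ ∃ n : ℤ, q = 2 * n := by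
  rw [phase_apply, Complex.exp_eq_one_iff]
  refine exists_congr fun n => ?_
  rw [show (n : ℂ) * (2 * Real.pi * Complex.I) = Real.pi * Complex.I * ((2 * n : ℚ) : ℂ) by
    push_cast; ring, mul_right_inj' (by simp [Real.pi_ne_zero]), Rat.cast_inj]

lemma phase_eq_phase_iff {p q : ℚ} : phase p = phase q ↔ ∃ n : ℤ, p = q + 2 * n := by
  rw [← div_eq_one_iff_eq (phase_ne_zero q), ← AddChar.map_sub_eq_div, phase_eq_one_iff]
  simp only [sub_eq_iff_eq_add']

lemma phase_intCast_of_even {n : ℤ} (hn : Even n) : phase n = 1 := by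
  obtain ⟨k, rfl⟩ := hn
  exact phase_eq_one_iff.2 ⟨k, by push_cast; ring⟩

lemma norm_phase (q : ℚ) : ‖phase q‖ = 1 := by
  rw [phase_apply, mul_right_comm]
  exact_mod_cast Complex.norm_exp_ofReal_mul_I (Real.pi * q)

lemma sum_eq_sum_filter_of_add_eq_mul_addChar {B H : Type*} [AddGroup B] [Fintype B] [AddGroup H]
    [Finite H] {f : B → ℂ} {φ : H → B} {b : B → AddChar H ℂ}
    (hf : ∀ x h, f (x + φ h) = f x * b x h) [DecidablePred fun x => b x = 0] :
    ∑ x, f x = ∑ x with b x = 0, f x := by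
  have := Fintype.ofFinite H
  have hH : (Fintype.card H : ℂ) ≠ 0 := Nat.cast_ne_zero.2 Fintype.card_ne_zero
  refine mul_left_cancel₀ hH ?_
  calc (Fintype.card H : ℂ) * ∑ x, f x = ∑ h : H, ∑ x, f (x + φ h) := by
        have htranslate (h : H) : ∑ x, f (x + φ h) = ∑ x, f x :=
          Equiv.sum_comp (Equiv.addRight (φ h)) f
        simp [htranslate]
    _ = ∑ x, f x * ∑ h, b x h := by
        simp_rw [hf, Finset.mul_sum]
        exact Finset.sum_comm
    _ = Fintype.card H * ∑ x with b x = 0, f x := by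
        simp_rw [AddChar.sum_eq_ite, Finset.sum_filter, Finset.mul_sum]
        exact Finset.sum_congr rfl fun x _ => by split_ifs <;> simp [mul_comm]

lemma card_mul_sum_comp_of_surjective {A B : Type*} [AddGroup A] [AddGroup B] [Fintype A]
    [Fintype B] {g : A →+ B} (hg : Function.Surjective g) (f : B → ℂ) :
    Fintype.card B * ∑ x, f (g x) = Fintype.card A * ∑ y, f y := by
  classical
  have hfiber (y : B) : (Finset.univ.filter fun x => g x = y).card =
      (Finset.univ.filter fun x => g x = 0).card :=
    AddMonoidHom.card_fiber_eq_of_mem_range g (hg y) (hg 0)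
  have hcard : Fintype.card A = Fintype.card B * (Finset.univ.filter fun x => g x = 0).card := by
    rw [← Finset.card_univ, Finset.card_eq_sum_card_fiberwise fun x _ => Finset.mem_univ (g x)]
    simp [hfiber]
  rw [← Finset.sum_fiberwise' Finset.univ g f]
  simp only [Finset.sum_const, hfiber, hcard, nsmul_eq_mul, ← Finset.mul_sum, Nat.cast_mul,
    mul_assoc]

variable {ι : Type*} [Fintype ι] [DecidableEq ι]

lemma discForm_transpose_mulVec_left (M : Matrix ι ι ℤ) [NeZero M.det] (x y : ι → ℤ) :
    discForm M (Mᵀ *ᵥ x) y = (x ⬝ᵥ y : ℤ) := by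
  have hone : discForm 1 x y = (x ⬝ᵥ y : ℤ) := by
    have : NeZero (1 : Matrix ι ι ℤ).det := ⟨by simp⟩
    simpa using discForm_mulVec_right 1 x y
  rw [← hone, ← discForm_mul_transpose_mulVec 1 M, Matrix.one_mul]

lemma phase_discForm_self_eq {M : Matrix ι ι ℤ} [NeZero M.det] (hM : IsEvenGram M)
    {x y : ι → ℤ} (hxy : (Submodule.Quotient.mk x : Coker M) = Submodule.Quotient.mk y) :
    phase (discForm M x x) = phase (discForm M y y) := by
  obtain ⟨z, rfl⟩ := Coker.mk_eq_mk_iff.1 hxy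
  obtain ⟨k, hk⟩ := hM.even_dotProduct_mulVec z
  refine phase_eq_phase_iff.2 ⟨y ⬝ᵥ z + k, ?_⟩
  rw [discForm_add_left, discForm_add_right, discForm_add_right, discForm_mulVec_right,
    discForm_comm hM.isSymm (M *ᵥ z) y, discForm_mulVec_right, discForm_mulVec_right,
    dotProduct_comm (M *ᵥ z), hk]
  push_cast
  ring

/-- The values `exp(π i q(x))` of the discriminant quadratic form `q : Coker M → ℚ/2ℤ` of an even
lattice with Gram matrix `M`, computed on a chosen representative of `x`. -/
noncomputable def discPhase (M : Matrix ι ι ℤ) (x : Coker M) : ℂ :=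
  phase (discForm M x.out x.out)

lemma discPhase_mk {M : Matrix ι ι ℤ} [NeZero M.det] (hM : IsEvenGram M) (x : ι → ℤ) :
    discPhase M (Submodule.Quotient.mk x) = phase (discForm M x x) :=
  phase_discForm_self_eq hM (Submodule.Quotient.mk_out _)

lemma phase_two_mul_discForm_eq {M : Matrix ι ι ℤ} [NeZero M.det] (x : ι → ℤ) {y y' : ι → ℤ}
    (h : (Submodule.Quotient.mk y : Coker M) = Submodule.Quotient.mk y') :
    phase (2 * discForm M x y) = phase (2 * discForm M x y') := by
  obtain ⟨z, rfl⟩ := Coker.mk_eq_mk_iff.1 h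
  refine phase_eq_phase_iff.2 ⟨x ⬝ᵥ z, ?_⟩
  rw [discForm_add_right, discForm_mulVec_right]
  ring

/-- The character `y ↦ exp(2 π i xᵀ M⁻¹ y)` of `Coker M`, for `x` in `ℤ^ι`. -/
noncomputable def discChar (M : Matrix ι ι ℤ) [NeZero M.det] (x : ι → ℤ) :
    AddChar (Coker M) ℂ where
  toFun y := phase (2 * discForm M x y.out)
  map_zero_eq_one' := by
    rw [phase_two_mul_discForm_eq x (Submodule.Quotient.mk_out (0 : Coker M)), ← mulVec_zero M,
      discForm_mulVec_right]
    simp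
  map_add_eq_mul' y y' := by
    rw [phase_two_mul_discForm_eq (y' := y.out + y'.out) x (by simp), discForm_add_right, mul_add,
      AddChar.map_add_eq_mul]

lemma discChar_mk (M : Matrix ι ι ℤ) [NeZero M.det] (x y : ι → ℤ) :
    discChar M x (Submodule.Quotient.mk y) = phase (2 * discForm M x y) :=
  phase_two_mul_discForm_eq x (Submodule.Quotient.mk_out _)

lemma discChar_eq_zero_iff {M : Matrix ι ι ℤ} [NeZero M.det] {x : ι → ℤ} :
    discChar M x = 0 ↔ ∃ y, x = Mᵀ *ᵥ y := by
  have htrivial : discChar M x = 0 ↔ ∀ y, ∃ n : ℤ, discForm M x y = n := by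
    rw [AddChar.eq_zero_iff, (Submodule.mkQ_surjective _).forall]
    simp only [Submodule.mkQ_apply, discChar_mk, phase_eq_one_iff,
      mul_right_inj' (two_ne_zero (α := ℚ))]
  rw [htrivial]
  refine ⟨exists_eq_transpose_mulVec_of_discForm, ?_⟩
  rintro ⟨z, rfl⟩ y
  exact ⟨_, discForm_transpose_mulVec_left M z y⟩

/-- The Gauss sum `∑ exp(π i q(x))` of the discriminant form `q` of an even lattice. -/
noncomputable def discGaussSum (M : Matrix ι ι ℤ) [NeZero M.det] : ℂ := ∑ x, discPhase M x

section Sublattice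

variable {M P : Matrix ι ι ℤ} [NeZero P.det]

variable (M P) in
lemma Coker.map_transpose_injective :
    Function.Injective (Coker.map Pᵀ 1 (by rw [Matrix.mul_one, Matrix.mul_assoc]) :
      Coker (M * P) →ₗ[ℤ] Coker (Pᵀ * M * P)) := by
  have hinj : Function.Injective Pᵀ.mulVec :=
    mulVec_injective_of_det_ne_zero (NeZero.ne Pᵀ.det)
  intro x y h
  obtain ⟨x, rfl⟩ := Submodule.mkQ_surjective _ x
  obtain ⟨y, rfl⟩ := Submodule.mkQ_surjective _ y
  obtain ⟨z, hz⟩ := Coker.mk_eq_mk_iff.1 h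
  refine Coker.mk_eq_mk_iff.2 ⟨z, hinj ?_⟩
  simpa [mulVec_add, mulVec_transpose, Matrix.mul_assoc] using hz

variable (M) in
lemma discChar_out_eq_zero_iff (x : Coker (Pᵀ * M * P)) :
    discChar P x.out = 0 ↔ ∃ y, Submodule.Quotient.mk (Pᵀ *ᵥ y) = x := by
  rw [discChar_eq_zero_iff]
  refine ⟨fun ⟨y, hy⟩ => ⟨y, by rw [← hy, Submodule.Quotient.mk_out]⟩, ?_⟩
  rintro ⟨y, hy⟩
  rw [← Submodule.Quotient.mk_out x] at hy
  obtain ⟨z, hz⟩ := Coker.mk_eq_mk_iff.1 hy.symm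
  exact ⟨y + (M * P) *ᵥ z, by rw [hz, mulVec_add, mulVec_mulVec, Matrix.mul_assoc]⟩

variable [NeZero M.det]

lemma discPhase_add_mulVec (hM : IsEvenGram M) (x h : ι → ℤ) :
    discPhase (Pᵀ * M * P) (Submodule.Quotient.mk (x + (Pᵀ * M) *ᵥ h)) =
      discPhase (Pᵀ * M * P) (Submodule.Quotient.mk x) *
        discChar P x (Submodule.Quotient.mk h) := by
  have hN := hM.transpose_mul_mul P
  have hself : discForm (Pᵀ * M * P) ((Pᵀ * M) *ᵥ h) ((Pᵀ * M) *ᵥ h) = (h ⬝ᵥ M *ᵥ h : ℤ) := by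
    rw [discForm_mul_mulVec, ← mulVec_mulVec, discForm_transpose_mulVec_left, dotProduct_comm]
  have hcross : discForm (Pᵀ * M * P) x ((Pᵀ * M) *ᵥ h) = discForm P x h := discForm_mul_mulVec ..
  rw [discPhase_mk hN, discPhase_mk hN, discChar_mk, discForm_add_left, discForm_add_right,
    discForm_add_right, discForm_comm hN.isSymm ((Pᵀ * M) *ᵥ h) x, hself, hcross, ← add_assoc,
    AddChar.map_add_eq_mul, phase_intCast_of_even (hM.even_dotProduct_mulVec h), mul_one,
    add_assoc, ← two_mul, AddChar.map_add_eq_mul]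

lemma discPhase_transpose_mulVec (hM : IsEvenGram M) (x : ι → ℤ) :
    discPhase (Pᵀ * M * P) (Submodule.Quotient.mk (Pᵀ *ᵥ x)) =
      discPhase M (Submodule.Quotient.mk x) := by
  rw [discPhase_mk (hM.transpose_mul_mul P), discPhase_mk hM, discForm_mul_transpose_mulVec,
    discForm_mul_mulVec]

lemma discGaussSum_transpose_mul_mul_eq_sum (hM : IsEvenGram M) :
    discGaussSum (Pᵀ * M * P) =
      ∑ y : Coker (M * P), discPhase M (Coker.map 1 P (Matrix.one_mul _) y) := by
  classical
  let shift : Coker P →ₗ[ℤ] Coker (Pᵀ * M * P) := Coker.map (Pᵀ * M) 1 (Matrix.mul_one _).symm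
  let incl : Coker (M * P) ↪ Coker (Pᵀ * M * P) := ⟨_, Coker.map_transpose_injective M P⟩
  have hshift (x h) : discPhase (Pᵀ * M * P) (x + shift h) =
      discPhase (Pᵀ * M * P) x * discChar P x.out h := by
    have h := discPhase_add_mulVec (P := P) hM x.out h.out
    rwa [Submodule.Quotient.mk_add, ← Coker.map_mk (Matrix.mul_one _).symm,
      Submodule.Quotient.mk_out, Submodule.Quotient.mk_out] at h
  have hsupport : (Finset.univ.filter fun x : Coker (Pᵀ * M * P) => discChar P x.out = 0) =
      Finset.univ.map incl := by
    ext x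
    rw [Finset.mem_filter_univ, discChar_out_eq_zero_iff, Finset.mem_map]
    simp only [Finset.mem_univ, true_and, (Submodule.mkQ_surjective _).exists]
    rfl
  rw [discGaussSum, sum_eq_sum_filter_of_add_eq_mul_addChar hshift, hsupport, Finset.sum_map]
  refine Finset.sum_congr rfl fun y _ => ?_
  obtain ⟨y, rfl⟩ := Submodule.mkQ_surjective _ y
  simpa [incl] using discPhase_transpose_mulVec hM y

theorem discGaussSum_transpose_mul_mul (hM : IsEvenGram M) :
    discGaussSum (Pᵀ * M * P) = P.det.natAbs * discGaussSum M := by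
  let proj : Coker (M * P) →ₗ[ℤ] Coker M := Coker.map 1 P (Matrix.one_mul _)
  have hproj : Function.Surjective proj := fun y => ⟨Submodule.Quotient.mk y.out, by simp [proj]⟩
  have hcount := card_mul_sum_comp_of_surjective (g := proj.toAddMonoidHom) hproj (discPhase M)
  rw [← Nat.card_eq_fintype_card, ← Nat.card_eq_fintype_card, Coker.natCard_eq, Coker.natCard_eq,
    det_mul, Int.natAbs_mul, Nat.cast_mul, mul_assoc] at hcount
  rw [discGaussSum_transpose_mul_mul_eq_sum hM]
  exact mul_left_cancel₀ (by simp [NeZero.ne]) hcount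

end Sublattice

end GaussSum

section Diagonalization

variable {ι : Type*} [Fintype ι] [DecidableEq ι]

lemma exists_isUnit_det_isDiag_of_isSymm {K : Type*} [Field K] [Invertible (2 : K)]
    {A : Matrix ι ι K} (hA : A.IsSymm) :
    ∃ Q : Matrix ι ι K, IsUnit Q.det ∧ (Qᵀ * A * Q).IsDiag := by
  obtain ⟨v, hv⟩ :=
    LinearMap.BilinForm.exists_orthogonal_basis
      (LinearMap.BilinForm.isSymm_iff.1 (Matrix.isSymm_toBilin'_iff_isSymm.2 hA))
  let e : Fin (Module.finrank K (ι → K)) ≃ ι := Fintype.equivOfCardEq (by simp)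
  let b := v.reindex e
  have hcongr : ((Pi.basisFun K ι).toMatrix b)ᵀ * A * (Pi.basisFun K ι).toMatrix b =
      LinearMap.BilinForm.toMatrix b A.toBilin' := by
    rw [← LinearMap.BilinForm.toMatrix_mul_basis_toMatrix (Pi.basisFun K ι) b,
      LinearMap.BilinForm.toMatrix_basisFun, LinearMap.BilinForm.toMatrix'_toBilin']
  refine ⟨(Pi.basisFun K ι).toMatrix b, ?_, ?_⟩
  · rw [← Module.Basis.det_apply]
    exact (Pi.basisFun K ι).isUnit_det b
  · rw [hcongr]
    intro i j hij
    rw [LinearMap.BilinForm.toMatrix_apply, v.reindex_apply, v.reindex_apply]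
    exact hv (e.symm.injective.ne hij)

lemma exists_det_ne_zero_transpose_mul_mul_eq_diagonal {M : Matrix ι ι ℤ} (hM : M.IsSymm) :
    ∃ (P : Matrix ι ι ℤ) (d : ι → ℤ), P.det ≠ 0 ∧ Pᵀ * M * P = diagonal d := by
  obtain ⟨Q, hQ, hdiag⟩ :=
    exists_isUnit_det_isDiag_of_isSymm (K := ℚ) (hM.map (Int.cast : ℤ → ℚ))
  have hden : (Q.den : ℚ) ≠ 0 := Nat.cast_ne_zero.2 Q.den_ne_zero
  have hnum : Q.num.map (Int.cast : ℤ → ℚ) = (Q.den : ℚ) • Q := by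
    rw [← smul_inv_smul₀ hden (Q.num.map _), Q.inv_denom_smul_num]
  have hnumdiag : ((Q.numᵀ * M * Q.num).map (Int.cast : ℤ → ℚ)).IsDiag := by
    rw [map_mul_intCast, map_mul_intCast, transpose_map, hnum, transpose_smul, Matrix.smul_mul,
      Matrix.smul_mul, Matrix.mul_smul]
    exact (hdiag.smul _).smul _
  refine ⟨Q.num, (Q.numᵀ * M * Q.num).diag, fun hdet => ?_,
    (IsDiag.diagonal_diag fun i j hij => Int.cast_injective (hnumdiag hij)).symm⟩
  have hdetQ : (Q.den : ℚ) ^ Fintype.card ι * Q.det = 0 := by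
    rw [← det_smul, ← hnum, ← Int.cast_det, hdet, Int.cast_zero]
  exact mul_ne_zero (pow_ne_zero _ hden) hQ.ne_zero hdetQ

open QuadraticMap in
lemma toQuadraticForm'_equivalent_weightedSumSquares {K : Type*} [CommRing K]
    {A P : Matrix ι ι K} {w : ι → K} (hP : IsUnit P.det) (h : Pᵀ * A * P = diagonal w) :
    Equivalent A.toQuadraticForm' (weightedSumSquares K w) := by
  refine Equivalent.symm ⟨⟨P.toLinearEquiv' (P.invertibleOfIsUnitDet hP), fun x => ?_⟩⟩
  have hdiag : weightedSumSquares K w x = x ⬝ᵥ diagonal w *ᵥ x := by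
    simp only [weightedSumSquares_apply, dotProduct, mulVec_diagonal, smul_eq_mul]
    exact Finset.sum_congr rfl fun i _ => by ring
  rw [hdiag, ← h, ← mulVec_mulVec, ← mulVec_mulVec, dotProduct_mulVec x, vecMul_transpose]
  exact Matrix.toLinearMap₂'_apply' ..

/-- The signature, as a single integer, of the lattice with Gram matrix `M`. -/
noncomputable def signature (M : Matrix ι ι ℤ) : ℤ :=
  sigPos (M.map (Int.cast : ℤ → ℝ)).toQuadraticForm' -
    sigNeg (M.map (Int.cast : ℤ → ℝ)).toQuadraticForm'

lemma signature_eq_sum_sign {M : Matrix ι ι ℤ} {P : Matrix ι ι ℝ} {w : ι → ℝ}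
    (hP : IsUnit P.det) (h : Pᵀ * M.map (Int.cast : ℤ → ℝ) * P = diagonal w) :
    signature M = ∑ i, (SignType.sign (w i) : ℤ) := by
  have hequiv := toQuadraticForm'_equivalent_weightedSumSquares hP h
  have hsign (x : ℝ) : (SignType.sign x : ℤ) =
      (if 0 < x then 1 else 0) - if x < 0 then 1 else 0 := by
    rcases lt_trichotomy x 0 with hx | rfl | hx
    · simp [hx, hx.not_gt]
    · simp
    · simp [hx, hx.not_gt]
  rw [signature, QuadraticForm.sigPos_of_equiv_weightedSumSquares hequiv,
    QuadraticForm.sigNeg_of_equiv_weightedSumSquares hequiv]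
  simp [hsign, Finset.sum_sub_distrib, Set.ncard_eq_toFinset_card']

lemma transpose_mul_mul_map_intCast {K : Type*} [CommRing K] {M P : Matrix ι ι ℤ} {d : ι → ℤ}
    (h : Pᵀ * M * P = diagonal d) :
    (P.map (Int.cast : ℤ → K))ᵀ * M.map Int.cast * P.map Int.cast =
      diagonal fun i => (d i : K) := by
  rw [← transpose_map, ← map_mul_intCast, ← map_mul_intCast, h, diagonal_map Int.cast_zero]

lemma signature_eq_sum_sign_of_int {M P : Matrix ι ι ℤ} {d : ι → ℤ} (hP : P.det ≠ 0)
    (h : Pᵀ * M * P = diagonal d) : signature M = ∑ i, (SignType.sign (d i) : ℤ) := by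
  have : NeZero P.det := ⟨hP⟩
  rw [signature_eq_sum_sign (isUnit_det_map_intCast P) (transpose_mul_mul_map_intCast h)]
  simp

end Diagonalization

section Milgram

variable {ι : Type*} [Fintype ι] [DecidableEq ι]

lemma phase_sum {α : Type*} (s : Finset α) (f : α → ℚ) :
    phase (∑ i ∈ s, f i) = ∏ i ∈ s, phase (f i) := by
  induction s using Finset.cons_induction with
  | empty => simp
  | cons i s hi ih => rw [Finset.sum_cons, Finset.prod_cons, AddChar.map_add_eq_mul, ih]

lemma conj_phase (q : ℚ) : starRingEnd ℂ (phase q) = phase (-q) := by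
  rw [phase_apply, phase_apply, ← Complex.exp_conj]
  simp

lemma sum_phase_sq_div {d : ℤ} [NeZero d] (hd : Even d) :
    ∑ r : Fin d.natAbs, phase ((r : ℕ) ^ 2 / d) =
      √(d.natAbs : ℝ) * phase ((SignType.sign d : ℤ) / 4) := by
  have : NeZero d.natAbs := ⟨Int.natAbs_ne_zero.2 (NeZero.ne d)⟩
  have hpos : ∑ r : Fin d.natAbs, phase ((r : ℕ) ^ 2 / d.natAbs) =
      √(d.natAbs : ℝ) * phase (1 / 4) := by
    convert sum_exp_sq_div (Int.natAbs_even.2 hd) using 3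
    · rw [phase_apply]
      push_cast
      ring_nf
    · rw [phase_apply]
      push_cast
      ring_nf
  rcases (NeZero.ne d).lt_or_gt with hneg | hpos'
  · have habs : (d : ℚ) = -d.natAbs := by
      rw [← Int.cast_natCast d.natAbs, Int.ofNat_natAbs_of_nonpos hneg.le, Int.cast_neg, neg_neg]
    have hconj := congrArg (starRingEnd ℂ) hpos
    simp only [map_sum, map_mul, Complex.conj_ofReal, conj_phase] at hconj
    rw [sign_neg hneg, habs]
    simpa only [div_neg, neg_div, SignType.coe_neg_one, Int.cast_neg, Int.cast_one] using hconj
  · have habs : (d : ℚ) = d.natAbs := by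
      rw [← Int.cast_natCast d.natAbs, Int.natAbs_of_nonneg hpos'.le]
    rw [sign_pos hpos', habs]
    simpa using hpos

variable {d : ι → ℤ} [NeZero (diagonal d).det]

lemma neZero_of_neZero_det_diagonal (i : ι) : NeZero (d i) :=
  ⟨Finset.prod_ne_zero_iff.1 (det_diagonal (d := d) ▸ NeZero.ne _) i (Finset.mem_univ i)⟩

lemma discForm_diagonal (x : ι → ℤ) : discForm (diagonal d) x x = ∑ i, (x i : ℚ) ^ 2 / d i := by
  have hinv : (diagonal fun i => (d i : ℚ))⁻¹ = diagonal fun i => (d i : ℚ)⁻¹ := by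
    refine inv_eq_right_inv ?_
    have hd (i : ι) : (d i : ℚ) ≠ 0 :=
      Int.cast_ne_zero.2 (neZero_of_neZero_det_diagonal (d := d) i).ne
    simp [hd]
  rw [discForm, diagonal_map Int.cast_zero, hinv, dotProduct]
  refine Finset.sum_congr rfl fun i _ => ?_
  rw [mulVec_diagonal]
  ring

lemma bijective_mk_diagonal :
    Function.Bijective fun r : ∀ i, Fin (d i).natAbs =>
      (Submodule.Quotient.mk fun i => ((r i : ℕ) : ℤ) : Coker (diagonal d)) := by
  rw [Fintype.bijective_iff_injective_and_card]
  constructor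
  · intro r s h
    obtain ⟨z, hz⟩ := Coker.mk_eq_mk_iff.1 h
    ext i
    have hmod : ((r i : ℕ) : ℤ) ≡ (s i : ℕ) [ZMOD d i] := by
      refine Int.modEq_iff_dvd.2 ⟨-z i, ?_⟩
      have hi := congrFun hz i
      rw [Pi.add_apply, mulVec_diagonal] at hi
      linear_combination -hi
    rw [← Int.modEq_natAbs, Int.natCast_modEq_iff] at hmod
    rwa [Nat.ModEq, Nat.mod_eq_of_lt (r i).isLt, Nat.mod_eq_of_lt (s i).isLt] at hmod
  · rw [← Nat.card_eq_fintype_card (α := Coker _), Coker.natCard_eq, det_diagonal,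
      ← Int.natAbsHom_apply, map_prod]
    simp

lemma discGaussSum_diagonal (hd : IsEvenGram (diagonal d)) :
    discGaussSum (diagonal d) =
      √((diagonal d).det.natAbs : ℝ) * phase ((∑ i, (SignType.sign (d i) : ℤ) : ℤ) / 4) := by
  have hd0 (i : ι) : NeZero (d i) := neZero_of_neZero_det_diagonal i
  have heven (i : ι) : Even (d i) := by simpa using hd.even_diag i
  calc discGaussSum (diagonal d)
      = ∑ r : ∀ i, Fin (d i).natAbs, ∏ i, phase ((r i : ℕ) ^ 2 / d i) := by
        rw [discGaussSum, ← (bijective_mk_diagonal (d := d)).sum_comp]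
        refine Finset.sum_congr rfl fun r _ => ?_
        rw [discPhase_mk hd, discForm_diagonal, phase_sum]
        simp only [Int.cast_natCast]
    _ = ∏ i, (√((d i).natAbs : ℝ) * phase ((SignType.sign (d i) : ℤ) / 4)) := by
        rw [← Fintype.prod_sum fun i (r : Fin (d i).natAbs) => phase ((r : ℕ) ^ 2 / d i)]
        exact Finset.prod_congr rfl fun i _ => sum_phase_sq_div (heven i)
    _ = _ := by
        have hdet : (diagonal d).det.natAbs = ∏ i, (d i).natAbs := by
          rw [det_diagonal, ← Int.natAbsHom_apply, map_prod]
          rfl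
        rw [Finset.prod_mul_distrib, ← phase_sum, ← Finset.sum_div, hdet]
        rw [Nat.cast_prod, Real.sqrt_prod _ fun i _ => Nat.cast_nonneg _, Complex.ofReal_prod,
          Int.cast_sum]

/-- **Milgram's formula**. -/
theorem discGaussSum_eq {M : Matrix ι ι ℤ} [NeZero M.det] (hM : IsEvenGram M) :
    discGaussSum M = √(M.det.natAbs : ℝ) * phase (signature M / 4) := by
  obtain ⟨P, d, hP, hPd⟩ := exists_det_ne_zero_transpose_mul_mul_eq_diagonal hM.isSymm
  have : NeZero P.det := ⟨hP⟩
  have : NeZero (diagonal d).det := by rw [← hPd]; infer_instance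
  have hdet : √((Pᵀ * M * P).det.natAbs : ℝ) = P.det.natAbs * √(M.det.natAbs : ℝ) := by
    rw [det_mul, det_mul, det_transpose, mul_right_comm, Int.natAbs_mul, Int.natAbs_mul]
    push_cast
    rw [Real.sqrt_mul (by positivity), Real.sqrt_mul_self (by positivity)]
  have hsum := discGaussSum_transpose_mul_mul (P := P) hM
  have hdiag : discGaussSum (Pᵀ * M * P) =
      √((Pᵀ * M * P).det.natAbs : ℝ) * phase (signature M / 4) := by
    simp only [hPd, signature_eq_sum_sign_of_int hP hPd]
    exact discGaussSum_diagonal (hPd ▸ hM.transpose_mul_mul P)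
  rw [hsum, hdet] at hdiag
  refine mul_left_cancel₀ (Nat.cast_ne_zero.2 (Int.natAbs_ne_zero.2 hP)) (hdiag.trans ?_)
  push_cast
  ring

end Milgram

section ScaledInverse

lemma neZero_of_natAbs_eq {n : ℤ} {m : ℕ} [NeZero m] (h : n.natAbs = m) : NeZero n :=
  ⟨fun hn => NeZero.ne m (by rw [← h, hn, Int.natAbs_zero])⟩

variable {ι : Type*} [Fintype ι] [DecidableEq ι] {M X : Matrix ι ι ℤ} {n : ℤ}

lemma exists_mul_eq_natAbs_det_smul_one (M : Matrix ι ι ℤ) :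
    ∃ X, M * X = (M.det.natAbs : ℤ) • 1 :=
  ⟨M.det.sign • M.adjugate, by
    rw [Matrix.mul_smul, mul_adjugate, smul_smul, Int.sign_mul_self_eq_natAbs]⟩

lemma isSymm_of_mul_eq_smul_one (hM : M.IsSymm) (hn : n ≠ 0) (h : M * X = n • 1) : X.IsSymm := by
  refine smul_right_injective _ hn ?_
  calc n • Xᵀ = Xᵀ * (M * X) := by rw [h, Matrix.mul_smul, Matrix.mul_one]
    _ = (M * X)ᵀ * X := by rw [transpose_mul, hM.eq, Matrix.mul_assoc]
    _ = n • X := by rw [h, transpose_smul, transpose_one, Matrix.smul_mul, Matrix.one_mul]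

lemma discForm_mul_eq_dotProduct_mulVec [NeZero M.det] (h : M * X = n • 1) (x y : ι → ℤ) :
    discForm M x y * n = (x ⬝ᵥ X *ᵥ y : ℤ) := by
  rw [← discForm_mulVec_right M, mulVec_mulVec, h, smul_mulVec, one_mulVec]
  simp only [discForm, Pi.smul_apply, smul_eq_mul, Int.cast_mul]
  rw [show (fun i => (n : ℚ) * (y i : ℚ)) = (n : ℚ) • fun i => (y i : ℚ) from rfl, mulVec_smul,
    dotProduct_smul, smul_eq_mul, mul_comm]

/-- The discriminant quadratic form `z ↦ zᵀ M⁻¹ z` takes integral values: `DeltaZero` over an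
arbitrary index type. -/
def DiscIntegral (M : Matrix ι ι ℤ) : Prop := ∀ z, ∃ n : ℤ, discForm M z z = n

lemma discIntegral_iff_isEvenGram [NeZero M.det] (hM : M.IsSymm) (h : M * X = (2 : ℤ) • 1) :
    DiscIntegral M ↔ IsEvenGram X := by
  have hdisc (z : ι → ℤ) : (∃ n : ℤ, discForm M z z = n) ↔ Even (z ⬝ᵥ X *ᵥ z) := by
    have hz := discForm_mul_eq_dotProduct_mulVec h z z
    rw [even_iff_exists_two_mul]
    refine exists_congr fun n => ?_
    rw [← Int.cast_inj (α := ℚ), ← hz]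
    push_cast
    exact ⟨fun hn => by rw [hn, mul_comm], fun hn => by linear_combination hn / 2⟩
  simp only [DiscIntegral, hdisc]
  refine ⟨fun hX => ⟨isSymm_of_mul_eq_smul_one hM two_ne_zero h, fun i => ?_⟩,
    fun hX => hX.even_dotProduct_mulVec⟩
  simpa using hX (Pi.single i 1)

lemma signature_eq_of_mul_eq_smul_one [NeZero M.det] (hM : M.IsSymm) (hn : 0 < n)
    (h : M * X = n • 1) : signature X = signature M := by
  obtain ⟨P, d, hP, hd⟩ := exists_det_ne_zero_transpose_mul_mul_eq_diagonal hM
  have hcongr : (M * P)ᵀ * X * (M * P) = diagonal (n • d) := by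
    calc (M * P)ᵀ * X * (M * P) = Pᵀ * (M * X) * M * P := by
          rw [transpose_mul, hM.eq]
          simp only [Matrix.mul_assoc]
      _ = n • (Pᵀ * M * P) := by
          rw [h, Matrix.mul_smul, Matrix.mul_one, Matrix.smul_mul, Matrix.smul_mul]
      _ = diagonal (n • d) := by rw [hd, diagonal_smul]
  have hMP : (M * P).det ≠ 0 := by
    rw [det_mul]
    exact mul_ne_zero (NeZero.ne _) hP
  rw [signature_eq_sum_sign_of_int hMP hcongr, signature_eq_sum_sign_of_int hP hd]
  simp [sign_mul, sign_pos hn]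

end ScaledInverse

section SignatureCongruences

lemma phase_intCast (n : ℤ) : phase n = (-1) ^ n := by
  rw [phase_apply, mul_comm, Rat.cast_intCast, Complex.exp_int_mul, Complex.exp_pi_mul_I]

lemma phase_intCast_div_two (n : ℤ) : phase (n / 2) = Complex.I ^ n := by
  have hI : Complex.I ^ n = Complex.exp (Real.pi / 2 * Complex.I) ^ n := by
    rw [Complex.exp_pi_div_two_mul_I]
  rw [hI, ← Complex.exp_int_mul, phase_apply]
  push_cast
  ring_nf

lemma gaussianInt_pow_four_of_norm_eq_two_pow {z : GaussianInt} {a : ℕ} (hz : z.norm = 2 ^ a) :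
    z ^ 4 = (-4) ^ a := by
  induction a generalizing z with
  | zero =>
    obtain ⟨x, y⟩ := z
    have hsq : x * x + y * y = 1 := by simpa [Zsqrtd.norm_def] using hz
    have hxy : x * y = 0 := by
      by_contra hne
      obtain ⟨hx, hy⟩ := mul_ne_zero_iff.1 hne
      nlinarith [mul_self_pos.2 hx, mul_self_pos.2 hy]
    ext <;> simp only [pow_succ, pow_zero, one_mul, Zsqrtd.re_mul, Zsqrtd.im_mul, Zsqrtd.re_one,
      Zsqrtd.im_one]
    · linear_combination (x * x + y * y + 1) * hsq - 8 * (x * y) * hxy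
    · linear_combination 4 * (x * x - y * y) * hxy
  | succ a ih =>
    obtain ⟨x, y⟩ := z
    have hsq : x * x + y * y = 2 ^ (a + 1) := by simpa [Zsqrtd.norm_def] using hz
    obtain ⟨u, hu⟩ : Even (x + y) := by
      have : Even (x * x + y * y) := hsq ▸ (even_two.pow_of_ne_zero a.succ_ne_zero)
      simpa [Int.even_add, Int.even_mul] using this
    have hfactor : (⟨x, y⟩ : GaussianInt) = ⟨1, 1⟩ * ⟨u, u - x⟩ := by
      ext
      · simp
      · simp only [Zsqrtd.im_mul, one_mul]
        linarith
    have hnorm : Zsqrtd.norm (⟨u, u - x⟩ : GaussianInt) = 2 ^ a := by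
      rw [hfactor, Zsqrtd.norm_mul, pow_succ'] at hz
      exact mul_left_cancel₀ two_ne_zero hz
    have hfour : (⟨1, 1⟩ : GaussianInt) ^ 4 = -4 := by decide
    rw [hfactor, mul_pow, ih hnorm, hfour, pow_succ']

variable {ι : Type*} [Fintype ι] [DecidableEq ι] {M X : Matrix ι ι ℤ} [NeZero M.det]

lemma discGaussSum_mem_range_toComplex (hM : IsEvenGram M) (h : M * X = (2 : ℤ) • 1) :
    discGaussSum M ∈ GaussianInt.toComplex.range := by
  refine sum_mem fun x _ => ?_
  induction x using Submodule.Quotient.induction_on with | H x => ?_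
  have hdisc : discForm M x x = (x ⬝ᵥ X *ᵥ x : ℤ) / 2 :=
    eq_div_of_mul_eq two_ne_zero (mod_cast discForm_mul_eq_dotProduct_mulVec h x x)
  rw [discPhase_mk hM, hdisc, phase_intCast_div_two]
  have hI : Complex.I ∈ GaussianInt.toComplex.range := ⟨⟨0, 1⟩, by simp [GaussianInt.toComplex_def]⟩
  obtain ⟨k, hk | hk⟩ := (x ⬝ᵥ X *ᵥ x).eq_nat_or_neg
  · rw [hk, zpow_natCast]
    exact pow_mem hI k
  · rw [hk, _root_.zpow_neg, zpow_natCast, ← inv_pow, Complex.inv_I]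
    exact pow_mem (neg_mem hI) k

lemma discGaussSum_pow_four_of_mul_eq (hM : IsEvenGram M) (h : M * X = (2 : ℤ) • 1) {a : ℕ}
    (ha : M.det.natAbs = 2 ^ a) : discGaussSum M ^ 4 = (-4) ^ a := by
  obtain ⟨z, hz⟩ := discGaussSum_mem_range_toComplex hM h
  have hnorm : z.norm = 2 ^ a := by
    have hreal : (z.norm : ℝ) = 2 ^ a := by
      rw [GaussianInt.intCast_real_norm, Complex.normSq_eq_norm_sq, hz, discGaussSum_eq hM,
        norm_mul, norm_phase, mul_one, Complex.norm_of_nonneg (Real.sqrt_nonneg _),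
        Real.sq_sqrt (Nat.cast_nonneg _), ha]
      push_cast
      rfl
    exact_mod_cast hreal
  rw [← hz, ← map_pow, gaussianInt_pow_four_of_norm_eq_two_pow hnorm, map_pow, map_neg, map_ofNat]

theorem signature_modEq_two_of_natAbs_det_eq (hM : IsEvenGram M) (h : M * X = (2 : ℤ) • 1) {a : ℕ}
    (ha : M.det.natAbs = 2 ^ a) : signature M ≡ a [ZMOD 2] := by
  have hsqrt : ((√(M.det.natAbs : ℝ) : ℝ) : ℂ) ^ 4 = 4 ^ a := by
    rw [← Complex.ofReal_pow, show 4 = 2 * 2 from rfl, pow_mul, Real.sq_sqrt (Nat.cast_nonneg _),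
      ha, ← Nat.cast_pow, ← pow_mul, mul_comm, pow_mul]
    norm_num
  have hphase : phase (signature M) = phase ((a : ℤ) : ℚ) := by
    refine mul_left_cancel₀ (pow_ne_zero a (OfNat.ofNat_ne_zero 4 : (4 : ℂ) ≠ 0)) ?_
    calc 4 ^ a * phase (signature M) = discGaussSum M ^ 4 := by
          rw [discGaussSum_eq hM, mul_pow, hsqrt, ← AddChar.map_nsmul_eq_pow]
          congr 2
          rw [nsmul_eq_mul]
          push_cast
          ring
      _ = 4 ^ a * phase ((a : ℤ) : ℚ) := by
          rw [discGaussSum_pow_four_of_mul_eq hM h ha, phase_intCast, zpow_natCast, ← mul_pow]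
          norm_num
  obtain ⟨n, hn⟩ := phase_eq_phase_iff.1 hphase
  refine Int.modEq_iff_dvd.2 ⟨-n, ?_⟩
  qify
  linear_combination -hn

lemma conj_discGaussSum_of_discIntegral (h : DiscIntegral M) :
    starRingEnd ℂ (discGaussSum M) = discGaussSum M := by
  rw [discGaussSum, map_sum]
  refine Finset.sum_congr rfl fun x _ => ?_
  obtain ⟨n, hn⟩ := h x.out
  rw [discPhase, conj_phase, phase_eq_phase_iff, hn]
  exact ⟨-n, by push_cast; ring⟩

theorem four_dvd_signature_of_discIntegral (hM : IsEvenGram M) (h : DiscIntegral M) :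
    4 ∣ signature M := by
  have hconj := conj_discGaussSum_of_discIntegral h
  have hdet : ((√(M.det.natAbs : ℝ) : ℝ) : ℂ) ≠ 0 := by simp [NeZero.ne]
  rw [discGaussSum_eq hM, map_mul, Complex.conj_ofReal, conj_phase, mul_right_inj' hdet,
    phase_eq_phase_iff] at hconj
  obtain ⟨n, hn⟩ := hconj
  refine ⟨-n, ?_⟩
  qify
  linear_combination -2 * hn

lemma discPhase_zero (hM : IsEvenGram M) : discPhase M 0 = 1 := by
  rw [← Submodule.Quotient.mk_zero, discPhase_mk hM]
  simp [discForm]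

lemma Coker.subsingleton_of_natAbs_det_eq_one (hdet : M.det.natAbs = 1) :
    Subsingleton (Coker M) := by
  rw [← Finite.card_le_one_iff_subsingleton, Coker.natCard_eq, hdet]

lemma exists_discForm_eq_intCast_of_mk_eq_zero {z : ι → ℤ}
    (hz : (Submodule.Quotient.mk z : Coker M) = 0) (x : ι → ℤ) : ∃ n : ℤ, discForm M x z = n := by
  rw [← Submodule.Quotient.mk_zero, Coker.mk_eq_mk_iff] at hz
  obtain ⟨w, rfl⟩ := hz
  exact ⟨x ⬝ᵥ w, by rw [zero_add, discForm_mulVec_right]⟩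

lemma discIntegral_of_natAbs_det_eq_one (hdet : M.det.natAbs = 1) : DiscIntegral M := fun z => by
  have := Coker.subsingleton_of_natAbs_det_eq_one hdet
  exact exists_discForm_eq_intCast_of_mk_eq_zero (Subsingleton.elim _ 0) z

theorem eight_dvd_signature_of_natAbs_det_eq_one (hM : IsEvenGram M) (hdet : M.det.natAbs = 1) :
    8 ∣ signature M := by
  have := Coker.subsingleton_of_natAbs_det_eq_one hdet
  have hγ : discGaussSum M = 1 := by
    rw [discGaussSum, Fintype.sum_subsingleton _ 0, discPhase_zero hM]
  rw [discGaussSum_eq hM, hdet, Nat.cast_one, Real.sqrt_one, Complex.ofReal_one, one_mul,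
    phase_eq_one_iff] at hγ
  obtain ⟨n, hn⟩ := hγ
  refine ⟨n, ?_⟩
  qify
  linear_combination 4 * hn

theorem eight_dvd_signature_of_natAbs_det_eq_two_pow_card (hM : IsEvenGram M)
    (h : M * X = (2 : ℤ) • 1) (hdet : M.det.natAbs = 2 ^ Fintype.card ι) (hδ : DiscIntegral M) :
    8 ∣ signature M := by
  have hX : IsEvenGram X := (discIntegral_iff_isEvenGram hM.isSymm h).1 hδ
  have hdetX : X.det.natAbs = 1 := by
    have hmul := congrArg (fun A => A.det.natAbs) h
    simp only [det_mul, Int.natAbs_mul, det_smul, det_one, mul_one, Int.natAbs_pow, hdet] at hmul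
    exact mul_left_cancel₀ (pow_ne_zero (Fintype.card ι) two_ne_zero) (hmul.trans (mul_one _).symm)
  have : NeZero X.det := neZero_of_natAbs_eq hdetX
  rw [← signature_eq_of_mul_eq_smul_one hM.isSymm two_pos h]
  exact eight_dvd_signature_of_natAbs_det_eq_one hX hdetX

lemma re_phase (q : ℚ) : (phase q).re = Real.cos (Real.pi * q) := by
  rw [phase_apply, mul_right_comm, ← Complex.exp_ofReal_mul_I_re]
  push_cast
  rfl

lemma re_discGaussSum (hM : IsEvenGram M) :
    (discGaussSum M).re = √(M.det.natAbs : ℝ) * (phase (signature M / 4)).re := by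
  rw [discGaussSum_eq hM, Complex.re_ofReal_mul]

lemma three_add_re_discPhase_le (hM : IsEvenGram M) {y : Coker M} (hy : y ≠ 0) :
    3 + (discPhase M y).re ≤ (discGaussSum M).re + M.det.natAbs := by
  classical
  have hnonneg (x : Coker M) : 0 ≤ 1 + (discPhase M x).re := by
    rw [discPhase, re_phase]
    linarith [Real.neg_one_le_cos (Real.pi * discForm M x.out x.out)]
  calc 3 + (discPhase M y).re = ∑ x ∈ {0, y}, (1 + (discPhase M x).re) := by
        rw [Finset.sum_pair hy.symm, discPhase_zero hM, Complex.one_re]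
        ring
    _ ≤ ∑ x, (1 + (discPhase M x).re) :=
        Finset.sum_le_univ_sum_of_nonneg hnonneg
    _ = (discGaussSum M).re + M.det.natAbs := by
        rw [Finset.sum_add_distrib, discGaussSum, Complex.re_sum, ← Coker.natCard_eq,
          Nat.card_eq_fintype_card]
        simp [add_comm]

lemma cos_signature_nonneg_of_natAbs_det_eq_two (hM : IsEvenGram M) (hdet : M.det.natAbs = 2) :
    0 ≤ Real.cos (Real.pi * (signature M / 4)) := by
  obtain ⟨y, hy⟩ : ∃ y : Coker M, y ≠ 0 := by
    have : Nontrivial (Coker M) := by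
      rw [← Finite.one_lt_card_iff_nontrivial, Coker.natCard_eq, hdet]
      exact one_lt_two
    exact exists_ne 0
  have hle := three_add_re_discPhase_le hM hy
  rw [re_discGaussSum hM, hdet, discPhase, re_phase, re_phase, Nat.cast_two] at hle
  have hcos := Real.neg_one_le_cos (Real.pi * discForm M y.out y.out)
  refine nonneg_of_mul_nonneg_right (a := √2) ?_ (by positivity)
  push_cast at hle
  linarith

theorem signature_modEq_eight_of_natAbs_det_eq_two (hM : IsEvenGram M) (hdet : M.det.natAbs = 2) :
    signature M ≡ 1 [ZMOD 8] ∨ signature M ≡ -1 [ZMOD 8] := by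
  obtain ⟨X, hX⟩ := exists_mul_eq_natAbs_det_smul_one M
  rw [hdet, Nat.cast_two] at hX
  have hodd := signature_modEq_two_of_natAbs_det_eq hM hX (a := 1) hdet
  have hcos := cos_signature_nonneg_of_natAbs_det_eq_two hM hdet
  have hneg : Real.cos (Real.pi * (3 / 4)) < 0 :=
    Real.cos_neg_of_pi_div_two_lt_of_lt (by linarith [Real.pi_pos]) (by linarith [Real.pi_pos])
  have hthree (k : ℤ) : signature M ≠ 8 * k + 3 := fun hk => by
    rw [hk, show Real.pi * (((8 * k + 3 : ℤ) : ℝ) / 4) = Real.pi * (3 / 4) + k * (2 * Real.pi) by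
      push_cast; ring, Real.cos_add_int_mul_two_pi] at hcos
    exact hneg.not_ge hcos
  have hfive (k : ℤ) : signature M ≠ 8 * k - 3 := fun hk => by
    rw [hk, show Real.pi * (((8 * k - 3 : ℤ) : ℝ) / 4) = k * (2 * Real.pi) - Real.pi * (3 / 4) by
      push_cast; ring, Real.cos_int_mul_two_pi_sub] at hcos
    exact hneg.not_ge hcos
  have hthree' := hthree (signature M / 8)
  have hfive' := hfive (signature M / 8 + 1)
  simp only [Int.ModEq] at hodd ⊢
  omega

theorem discIntegral_of_natAbs_det_eq_four (hM : IsEvenGram M) (hdet : M.det.natAbs = 4)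
    (hsig : signature M ≡ 4 [ZMOD 8]) : DiscIntegral M := by
  have hphase : phase (signature M / 4) = -1 := by
    obtain ⟨k, hk⟩ := hsig.symm.dvd
    rw [← zpow_one (-1 : ℂ), ← phase_intCast, phase_eq_phase_iff]
    refine ⟨k, ?_⟩
    qify at hk
    push_cast
    linear_combination hk / 4
  have hγ : (discGaussSum M).re = -2 := by
    rw [re_discGaussSum hM, hphase, hdet, Nat.cast_ofNat, show (4 : ℝ) = 2 ^ 2 by norm_num,
      Real.sqrt_sq zero_le_two]
    simp
  intro z
  by_cases hz : (Submodule.Quotient.mk z : Coker M) = 0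
  · exact exists_discForm_eq_intCast_of_mk_eq_zero hz z
  · have hle := three_add_re_discPhase_le hM hz
    rw [hγ, hdet, discPhase_mk hM, re_phase] at hle
    have hcos : Real.cos (Real.pi * discForm M z z) = -1 := by
      refine le_antisymm ?_ (Real.neg_one_le_cos _)
      push_cast at hle
      linarith
    obtain ⟨k, hk⟩ := Real.cos_eq_neg_one_iff.1 hcos
    refine ⟨1 + 2 * k, Rat.cast_injective (α := ℝ) (mul_left_cancel₀ Real.pi_ne_zero ?_)⟩
    push_cast
    linear_combination -hk

end SignatureCongruences

section ElementaryCokernel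

lemma Coker.forall_smul_eq_zero_iff {ι : Type*} [Fintype ι] [DecidableEq ι] {M : Matrix ι ι ℤ}
    {n : ℤ} : (∀ x : Coker M, n • x = 0) ↔ ∃ X, M * X = n • 1 := by
  constructor
  · intro h
    have hcol (i : ι) : ∃ z, n • Pi.single i 1 = M *ᵥ z := by
      have hi := h (Submodule.Quotient.mk (Pi.single i 1))
      rw [← Submodule.Quotient.mk_smul, ← Submodule.Quotient.mk_zero, Coker.mk_eq_mk_iff] at hi
      simpa only [zero_add] using hi
    choose z hz using hcol
    refine ⟨(of z)ᵀ, ext_of_mulVec_single fun i => ?_⟩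
    rw [← mulVec_mulVec, smul_mulVec, one_mulVec, hz, mulVec_single_one]
    rfl
  · rintro ⟨X, hX⟩ x
    induction x using Submodule.Quotient.induction_on with | H x => ?_
    rw [← Submodule.Quotient.mk_smul, ← Submodule.Quotient.mk_zero, Coker.mk_eq_mk_iff]
    exact ⟨X *ᵥ x, by rw [mulVec_mulVec, hX, smul_mulVec, one_mulVec, zero_add]⟩

lemma nonempty_linearEquiv_zmod_iff {A : Type*} [AddCommGroup A] {p a : ℕ} [Fact p.Prime] :
    Nonempty (A ≃ₗ[ℤ] (Fin a → ZMod p)) ↔ (∀ x : A, (p : ℤ) • x = 0) ∧ Nat.card A = p ^ a := by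
  constructor
  · rintro ⟨e⟩
    refine ⟨fun x => e.injective ?_, by simp [Nat.card_congr e.toEquiv]⟩
    rw [map_smul, map_zero]
    ext i
    simp
  · rintro ⟨hp, hcard⟩
    have : Finite A := Nat.finite_of_card_ne_zero (hcard ▸ pow_ne_zero a (NeZero.ne p))
    have : Module (ZMod p) A :=
      AddCommGroup.zmodModule fun x => (natCast_zsmul x p).symm.trans (hp x)
    have hrank : Module.finrank (ZMod p) A = Module.finrank (ZMod p) (Fin a → ZMod p) := by
      rw [Module.finrank_fin_fun]
      refine Nat.pow_right_injective (Fact.out : p.Prime).two_le ?_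
      exact (FiniteField.pow_finrank_eq_natCard p A).trans hcard
    obtain ⟨e⟩ := FiniteDimensional.nonempty_linearEquiv_of_finrank_eq hrank
    exact ⟨e.toAddEquiv.toIntLinearEquiv⟩

lemma elemOfLength_iff {r : ℕ} {M : Matrix (Fin r) (Fin r) ℤ} [NeZero M.det] {p a : ℕ}
    [Fact p.Prime] :
    ElemOfLength p a M ↔ (∃ X, M * X = (p : ℤ) • 1) ∧ M.det.natAbs = p ^ a := by
  rw [← Coker.forall_smul_eq_zero_iff, ← Coker.natCard_eq]
  exact nonempty_linearEquiv_zmod_iff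

lemma le_card_of_mul_eq_smul_one {ι : Type*} [Fintype ι] [DecidableEq ι] {M X : Matrix ι ι ℤ}
    {p a : ℕ} (hp : 1 < p) (h : M * X = (p : ℤ) • 1) (ha : M.det.natAbs = p ^ a) :
    a ≤ Fintype.card ι := by
  have hmul := congrArg (fun A => A.det.natAbs) h
  simp only [det_mul, Int.natAbs_mul, det_smul, det_one, mul_one, Int.natAbs_pow, ha,
    Int.natAbs_natCast] at hmul
  exact (Nat.pow_dvd_pow_iff_le_right hp).1 (Dvd.intro _ hmul)

end ElementaryCokernel

section Hyperbolic

lemma sum_sign_of_ne_zero {ι R : Type*} [Fintype ι] [Zero R] [LinearOrder R] {d : ι → R}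
    (hd : ∀ i, d i ≠ 0) :
    ∑ i, (SignType.sign (d i) : ℤ) =
      2 * (Finset.univ.filter fun i => 0 < d i).card - Fintype.card ι := by
  have hsign (i : ι) : (SignType.sign (d i) : ℤ) = 2 * (if 0 < d i then 1 else 0) - 1 := by
    rcases (hd i).lt_or_gt with h | h <;> simp [h, h.not_gt]
  simp only [hsign, Finset.sum_sub_distrib, ← Finset.mul_sum, Finset.sum_boole]
  simp

lemma diag_ne_zero_of_transpose_mul_mul_eq_diagonal {ι R : Type*} [Fintype ι] [DecidableEq ι]
    [CommRing R] [IsDomain R] {A P : Matrix ι ι R} {d : ι → R} (hA : A.det ≠ 0) (hP : P.det ≠ 0)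
    (h : Pᵀ * A * P = diagonal d) (i : ι) : d i ≠ 0 := by
  have hprod : ∏ i, d i ≠ 0 := by
    rw [← det_diagonal, ← h, det_mul, det_mul, det_transpose]
    exact mul_ne_zero (mul_ne_zero hP hA) hP
  exact Finset.prod_ne_zero_iff.1 hprod i (Finset.mem_univ i)

lemma exists_isUnit_det_transpose_mul_mul_eq_diagonal_sign {ι : Type*} [Fintype ι] [DecidableEq ι]
    {A P : Matrix ι ι ℝ} {d : ι → ℝ} (hP : IsUnit P.det) (hd : ∀ i, d i ≠ 0)
    (h : Pᵀ * A * P = diagonal d) :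
    ∃ Q : Matrix ι ι ℝ, IsUnit Q.det ∧
      Qᵀ * A * Q = diagonal fun i => (SignType.sign (d i) : ℝ) := by
  set s : ι → ℝ := fun i => (√|d i|)⁻¹
  have hs (i : ι) : s i * s i = |d i|⁻¹ := by rw [← mul_inv, Real.mul_self_sqrt (abs_nonneg _)]
  refine ⟨P * diagonal s, ?_, ?_⟩
  · rw [det_mul, det_diagonal]
    refine hP.mul (isUnit_iff_ne_zero.2 (Finset.prod_ne_zero_iff.2 fun i _ => ?_))
    exact inv_ne_zero (Real.sqrt_ne_zero'.2 (abs_pos.2 (hd i)))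
  · calc (P * diagonal s)ᵀ * A * (P * diagonal s) = diagonal s * (Pᵀ * A * P) * diagonal s := by
          rw [transpose_mul, diagonal_transpose]
          simp only [Matrix.mul_assoc]
      _ = diagonal fun i => (SignType.sign (d i) : ℝ) := by
          rw [h, diagonal_mul_diagonal, diagonal_mul_diagonal]
          congr 1
          funext i
          rw [mul_right_comm, hs, inv_mul_eq_iff_eq_mul₀ (abs_ne_zero.2 (hd i)), abs_mul_sign]

lemma transpose_mul_mul_submatrix {ι R : Type*} [Fintype ι] [DecidableEq ι] [CommRing R]
    {A P : Matrix ι ι R} {d : ι → R} (h : Pᵀ * A * P = diagonal d) (σ : Equiv.Perm ι) :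
    (P.submatrix id σ)ᵀ * A * P.submatrix id σ = diagonal (d ∘ σ) := by
  rw [← submatrix_diagonal_equiv, ← h, transpose_submatrix]
  rfl

variable {r : ℕ} {M : Matrix (Fin r) (Fin r) ℤ}

lemma isHyperbolicGram_of_transpose_mul_mul_eq_diagonal {P : Matrix (Fin r) (Fin r) ℤ}
    {d : Fin r → ℤ} (hP : P.det ≠ 0) (h : Pᵀ * M * P = diagonal d) (hd : ∀ i, d i ≠ 0)
    (hpos : ∀ i, 0 < d i ↔ (i : ℕ) = 0) : IsHyperbolicGram M := by
  have : NeZero P.det := ⟨hP⟩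
  obtain ⟨Q, hQ, hQd⟩ := exists_isUnit_det_transpose_mul_mul_eq_diagonal_sign
    (isUnit_det_map_intCast P) (fun i => Int.cast_ne_zero.2 (hd i))
    (transpose_mul_mul_map_intCast h)
  refine ⟨Q, hQ, hQd.trans (congrArg diagonal (funext fun i => ?_))⟩
  split_ifs with hi
  · simp [sign_pos ((hpos i).2 hi)]
  · simp [sign_neg (lt_of_le_of_ne (not_lt.1 fun h => hi ((hpos i).1 h)) (hd i))]

theorem isHyperbolicGram_iff_signature_eq [NeZero r] (hM : M.IsSymm) (hdet : M.det ≠ 0) :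
    IsHyperbolicGram M ↔ signature M = 2 - r := by
  constructor
  · rintro ⟨P, hP, h⟩
    have hfilter : (Finset.univ.filter fun i : Fin r => (0 : ℝ) < if (i : ℕ) = 0 then 1 else -1) =
        {0} := by
      ext i
      rcases eq_or_ne i 0 with hi | hi <;> simp [hi]
    rw [signature_eq_sum_sign hP h, sum_sign_of_ne_zero fun i => by split_ifs <;> norm_num, hfilter,
      Finset.card_singleton, Fintype.card_fin]
    norm_num
  · intro hsig
    obtain ⟨P, d, hP, h⟩ := exists_det_ne_zero_transpose_mul_mul_eq_diagonal hM
    have hd := diag_ne_zero_of_transpose_mul_mul_eq_diagonal hdet hP h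
    obtain ⟨i₀, hi₀⟩ : ∃ i₀, (Finset.univ.filter fun i => 0 < d i) = {i₀} := by
      rw [← Finset.card_eq_one]
      rw [signature_eq_sum_sign_of_int hP h, sum_sign_of_ne_zero hd, Fintype.card_fin] at hsig
      omega
    refine isHyperbolicGram_of_transpose_mul_mul_eq_diagonal ?_
      (transpose_mul_mul_submatrix h (Equiv.swap 0 i₀)) (fun i => hd _) fun i => ?_
    · rw [det_permute']
      exact mul_ne_zero (Units.ne_zero _) hP
    · have hi := Finset.ext_iff.1 hi₀ (Equiv.swap 0 i₀ i)
      simpa [Equiv.swap_apply_eq_iff] using hi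

end Hyperbolic

section DirectSum

variable {ι κ : Type*} {M : Matrix ι ι ℤ} {N : Matrix κ κ ℤ}

lemma isEvenGram_fromBlocks_iff :
    IsEvenGram (fromBlocks M 0 0 N) ↔ IsEvenGram M ∧ IsEvenGram N := by
  constructor
  · rintro ⟨hsymm, heven⟩
    obtain ⟨hM, -, -, hN⟩ := isSymm_fromBlocks_iff.1 hsymm
    exact ⟨⟨hM, fun i => heven (.inl i)⟩, ⟨hN, fun i => heven (.inr i)⟩⟩
  · rintro ⟨hM, hN⟩
    exact ⟨hM.isSymm.fromBlocks transpose_zero hN.isSymm, Sum.rec hM.even_diag hN.even_diag⟩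

lemma isEvenGram_submatrix_equiv_iff (e : κ ≃ ι) :
    IsEvenGram (M.submatrix e e) ↔ IsEvenGram M := by
  refine ⟨fun h => ⟨?_, fun i => ?_⟩, fun h => ⟨h.isSymm.submatrix e, fun i => h.even_diag (e i)⟩⟩
  · simpa using h.isSymm.submatrix e.symm
  · simpa using h.even_diag (e.symm i)

variable [Fintype ι] [DecidableEq ι] [Fintype κ] [DecidableEq κ]

lemma signature_fromBlocks (hM : M.IsSymm) (hN : N.IsSymm) :
    signature (fromBlocks M 0 0 N) = signature M + signature N := by
  obtain ⟨P, d, hP, hPd⟩ := exists_det_ne_zero_transpose_mul_mul_eq_diagonal hM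
  obtain ⟨Q, f, hQ, hQf⟩ := exists_det_ne_zero_transpose_mul_mul_eq_diagonal hN
  have hdet : (fromBlocks P 0 0 Q).det ≠ 0 := by
    rw [det_fromBlocks_zero₂₁]
    exact mul_ne_zero hP hQ
  have hdiag : (fromBlocks P 0 0 Q)ᵀ * fromBlocks M 0 0 N * fromBlocks P 0 0 Q =
      diagonal (Sum.elim d f) := by
    simp [fromBlocks_transpose, fromBlocks_multiply, hPd, hQf]
  rw [signature_eq_sum_sign_of_int hdet hdiag, signature_eq_sum_sign_of_int hP hPd,
    signature_eq_sum_sign_of_int hQ hQf]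
  simp

lemma signature_submatrix_equiv (hM : M.IsSymm) (e : κ ≃ ι) :
    signature (M.submatrix e e) = signature M := by
  obtain ⟨P, d, hP, hPd⟩ := exists_det_ne_zero_transpose_mul_mul_eq_diagonal hM
  have hdiag : (P.submatrix e e)ᵀ * M.submatrix e e * P.submatrix e e = diagonal (d ∘ e) := by
    rw [transpose_submatrix, submatrix_mul_equiv, submatrix_mul_equiv, hPd,
      submatrix_diagonal_equiv]
  rw [signature_eq_sum_sign_of_int (by rwa [det_submatrix_equiv_self]) hdiag,
    signature_eq_sum_sign_of_int hP hPd]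
  exact e.sum_comp fun i => (SignType.sign (d i) : ℤ)

end DirectSum

section Invariants

variable {ι κ : Type*} [Fintype ι] [DecidableEq ι] [Fintype κ] [DecidableEq κ]

/-- `M` is the Gram matrix of an even 2-elementary lattice of length `a` and signature `s`, and `e`
says whether its discriminant quadratic form is integral, i.e. whether `δ(M) = 0`. -/
structure HasInvariants (M : Matrix ι ι ℤ) (a : ℕ) (s : ℤ) (e : Prop) : Prop where
  isEvenGram : IsEvenGram M
  exists_mul_eq : ∃ X, M * X = (2 : ℤ) • 1
  natAbs_det : M.det.natAbs = 2 ^ a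
  signature_eq : signature M = s
  discIntegral_iff : DiscIntegral M ↔ e

namespace HasInvariants

variable {M : Matrix ι ι ℤ} {N : Matrix κ κ ℤ} {a b : ℕ} {s t : ℤ} {e f : Prop}

lemma neZero_det (h : HasInvariants M a s e) : NeZero M.det :=
  neZero_of_natAbs_eq h.natAbs_det

lemma fromBlocks (hM : HasInvariants M a s e) (hN : HasInvariants N b t f) :
    HasInvariants (fromBlocks M 0 0 N) (a + b) (s + t) (e ∧ f) := by
  obtain ⟨X, hX⟩ := hM.exists_mul_eq
  obtain ⟨Y, hY⟩ := hN.exists_mul_eq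
  have hXY : Matrix.fromBlocks M 0 0 N * Matrix.fromBlocks X 0 0 Y = (2 : ℤ) • 1 := by
    simp [fromBlocks_multiply, hX, hY, ← fromBlocks_one, fromBlocks_smul]
  have heven := isEvenGram_fromBlocks_iff.2 ⟨hM.isEvenGram, hN.isEvenGram⟩
  have hdet : (Matrix.fromBlocks M 0 0 N).det.natAbs = 2 ^ (a + b) := by
    rw [det_fromBlocks_zero₂₁, Int.natAbs_mul, hM.natAbs_det, hN.natAbs_det, pow_add]
  have := hM.neZero_det
  have := hN.neZero_det
  have : NeZero (Matrix.fromBlocks M 0 0 N).det := neZero_of_natAbs_eq hdet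
  refine ⟨heven, ⟨_, hXY⟩, hdet, ?_, ?_⟩
  · rw [signature_fromBlocks hM.isEvenGram.isSymm hN.isEvenGram.isSymm, hM.signature_eq,
      hN.signature_eq]
  · rw [discIntegral_iff_isEvenGram heven.isSymm hXY, isEvenGram_fromBlocks_iff,
      ← discIntegral_iff_isEvenGram hM.isEvenGram.isSymm hX, hM.discIntegral_iff,
      ← discIntegral_iff_isEvenGram hN.isEvenGram.isSymm hY, hN.discIntegral_iff]

lemma submatrix_equiv (h : HasInvariants M a s e) (σ : κ ≃ ι) :
    HasInvariants (M.submatrix σ σ) a s e := by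
  obtain ⟨X, hX⟩ := h.exists_mul_eq
  have hσX : M.submatrix σ σ * X.submatrix σ σ = (2 : ℤ) • 1 := by
    rw [submatrix_mul_equiv, hX, ← submatrix_one_equiv σ]
    rfl
  have heven := (isEvenGram_submatrix_equiv_iff σ).2 h.isEvenGram
  have hdet : (M.submatrix σ σ).det = M.det := det_submatrix_equiv_self σ M
  have := h.neZero_det
  have : NeZero (M.submatrix σ σ).det := ⟨hdet ▸ NeZero.ne M.det⟩
  refine ⟨heven, ⟨_, hσX⟩, hdet ▸ h.natAbs_det, ?_, ?_⟩
  · rw [signature_submatrix_equiv h.isEvenGram.isSymm, h.signature_eq]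
  · rw [discIntegral_iff_isEvenGram heven.isSymm hσX, isEvenGram_submatrix_equiv_iff,
      ← discIntegral_iff_isEvenGram h.isEvenGram.isSymm hX, h.discIntegral_iff]

end HasInvariants

theorem hasInvariants_iff {r a : ℕ} [NeZero r] {M : Matrix (Fin r) (Fin r) ℤ} {e : Prop} :
    HasInvariants M a (2 - r) e ↔ M.IsSymm ∧ (∀ i, Even (M i i)) ∧ M.det ≠ 0 ∧
      IsHyperbolicGram M ∧ ElemOfLength 2 a M ∧ (e ↔ DeltaZero M) := by
  constructor
  · intro h
    have := h.neZero_det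
    have hdet := NeZero.ne M.det
    exact ⟨h.isEvenGram.isSymm, h.isEvenGram.even_diag, hdet,
      (isHyperbolicGram_iff_signature_eq h.isEvenGram.isSymm hdet).2 h.signature_eq,
      elemOfLength_iff.2 ⟨h.exists_mul_eq, h.natAbs_det⟩, h.discIntegral_iff.symm⟩
  · rintro ⟨hsymm, heven, hdet, hhyp, hlen, hδ⟩
    have : NeZero M.det := ⟨hdet⟩
    obtain ⟨hX, ha⟩ := elemOfLength_iff.1 hlen
    exact ⟨⟨hsymm, heven⟩, hX, ha, (isHyperbolicGram_iff_signature_eq hsymm hdet).1 hhyp, hδ.symm⟩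

/-- Some Gram matrix of an even 2-elementary lattice of rank `r` has the invariants `a`, `s` and `e`
in the sense of `HasInvariants`. -/
def Realizable (r a : ℕ) (s : ℤ) (e : Prop) : Prop :=
  ∃ M : Matrix (Fin r) (Fin r) ℤ, HasInvariants M a s e

namespace Realizable

variable {r r' a a' : ℕ} {s s' : ℤ} {e e' : Prop}

lemma congr (h : Realizable r a s e) (hr : r = r') (ha : a = a') (hs : s = s') (he : e ↔ e') :
    Realizable r' a' s' e' := by
  subst hr ha hs
  rwa [← propext he]

lemma add (h : Realizable r a s e) (h' : Realizable r' a' s' e') :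
    Realizable (r + r') (a + a') (s + s') (e ∧ e') := by
  obtain ⟨M, hM⟩ := h
  obtain ⟨M', hM'⟩ := h'
  exact ⟨_, (hM.fromBlocks hM').submatrix_equiv finSumFinEquiv.symm⟩

lemma add_mul (h : Realizable r a s e) (h' : Realizable r' a' s' e') (n : ℕ) :
    Realizable (r + n * r') (a + n * a') (s + n * s') (e ∧ (n = 0 ∨ e')) := by
  induction n with
  | zero => exact h.congr (by simp) (by simp) (by simp) (by simp)
  | succ n ih =>
    exact (ih.add h').congr (by ring) (by ring) (by push_cast; ring) (by grind)

end Realizable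

end Invariants

section Examples

lemma isEvenGram_neg_of_diag_eq_two {ι : Type*} {C : Matrix ι ι ℤ} (hC : C.IsSymm)
    (hdiag : ∀ i, C i i = 2) : IsEvenGram (-C) :=
  ⟨hC.neg, fun i => by rw [neg_apply, hdiag]; decide⟩

variable {ι : Type*} [Fintype ι] [DecidableEq ι] {M C P : Matrix ι ι ℤ}

lemma HasInvariants.of_natAbs_det_eq_one (hM : IsEvenGram M) (hdet : M.det.natAbs = 1) :
    HasInvariants M 0 (signature M) True := by
  have : NeZero M.det := neZero_of_natAbs_eq hdet
  obtain ⟨X, hX⟩ := exists_mul_eq_natAbs_det_smul_one M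
  refine ⟨hM, ⟨(2 : ℤ) • X, ?_⟩, hdet, rfl, iff_true_intro (discIntegral_of_natAbs_det_eq_one hdet)⟩
  rw [Matrix.mul_smul, hX, hdet, Nat.cast_one, one_smul]

lemma HasInvariants.two_smul_of_natAbs_det_eq_one (hM : IsEvenGram M) (hdet : M.det.natAbs = 1) :
    HasInvariants ((2 : ℤ) • M) (Fintype.card ι) (signature M) True := by
  have hdet2 : ((2 : ℤ) • M).det.natAbs = 2 ^ Fintype.card ι := by
    rw [det_smul, Int.natAbs_mul, hdet, mul_one, Int.natAbs_pow]
    rfl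
  have : NeZero M.det := neZero_of_natAbs_eq hdet
  have : NeZero ((2 : ℤ) • M).det := neZero_of_natAbs_eq hdet2
  have hsymm : ((2 : ℤ) • M).IsSymm := hM.isSymm.smul 2
  obtain ⟨X, hX⟩ := exists_mul_eq_natAbs_det_smul_one M
  rw [hdet, Nat.cast_one] at hX
  have hX2 : ((2 : ℤ) • M) * X = (2 : ℤ) • 1 := by rw [Matrix.smul_mul, hX, one_smul]
  have hXeven : IsEvenGram X := by
    have hXM := hM.transpose_mul_mul X
    rwa [Matrix.mul_assoc, hX, one_smul, Matrix.mul_one,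
      (isSymm_of_mul_eq_smul_one hM.isSymm one_ne_zero hX).eq] at hXM
  refine ⟨⟨hsymm, fun i => (even_two_mul (M i i))⟩, ⟨X, hX2⟩, hdet2, ?_,
    iff_true_intro ((discIntegral_iff_isEvenGram hsymm hX2).2 hXeven)⟩
  rw [← signature_eq_of_mul_eq_smul_one hsymm two_pos hX2,
    signature_eq_of_mul_eq_smul_one hM.isSymm one_pos hX]

lemma HasInvariants.of_natAbs_det_eq_two (hM : IsEvenGram M) (hdet : M.det.natAbs = 2) :
    HasInvariants M 1 (signature M) False := by
  have : NeZero M.det := neZero_of_natAbs_eq hdet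
  obtain ⟨X, hX⟩ := exists_mul_eq_natAbs_det_smul_one M
  rw [hdet] at hX
  refine ⟨hM, ⟨X, hX⟩, hdet, rfl, iff_false_intro fun hδ => ?_⟩
  have hfour := four_dvd_signature_of_discIntegral hM hδ
  have height := signature_modEq_eight_of_natAbs_det_eq_two hM hdet
  simp only [Int.ModEq] at height
  omega

-- For a root lattice `C`, the columns of `P` are an orthogonal frame of roots.
lemma signature_neg_of_transpose_mul_mul_eq (h : Pᵀ * C * P = (2 : ℤ) • 1) :
    signature (-C) = -Fintype.card ι := by
  have hP : P.det ≠ 0 := fun h0 => by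
    have hdet := congrArg det h
    rw [det_mul, h0, mul_zero, det_smul, det_one, mul_one] at hdet
    exact pow_ne_zero _ two_ne_zero hdet.symm
  have hdiag : Pᵀ * -C * P = diagonal fun _ => -2 := by
    rw [Matrix.mul_neg, Matrix.neg_mul, h, smul_one_eq_diagonal, diagonal_neg]
  rw [signature_eq_sum_sign_of_int hP hdiag]
  simp

open CartanMatrix

lemma isEvenGram_hyperbolicPlane : IsEvenGram !![0, 1; 1, 0] := ⟨by decide, by decide⟩

lemma signature_hyperbolicPlane : signature !![0, 1; 1, 0] = 0 := by
  have hdiag : !![1, 1; 1, -1]ᵀ * !![0, 1; 1, 0] * !![1, 1; 1, -1] = diagonal ![(2 : ℤ), -2] := by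
    decide
  rw [signature_eq_sum_sign_of_int (by decide) hdiag]
  decide

lemma isEvenGram_neg_E₈ : IsEvenGram (-E₈) := isEvenGram_neg_of_diag_eq_two E₈_isSymm E₈_diag

lemma natAbs_det_neg_E₈ : (-E₈).det.natAbs = 1 := by simp [det_neg, E₈_det]

lemma signature_neg_E₈ : signature (-E₈) = -8 :=
  signature_neg_of_transpose_mul_mul_eq
    (P := !![1, 0, 0, 0, 1, 1, 1, 2; 0, 1, 0, 0, 1, 1, 2, 3; 0, 0, 0, 0, 2, 2, 2, 4;
      0, 0, 0, 0, 2, 2, 4, 6; 0, 0, 1, 0, 1, 2, 3, 5; 0, 0, 0, 0, 0, 2, 2, 4;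
      0, 0, 0, 1, 0, 1, 1, 3; 0, 0, 0, 0, 0, 0, 0, 2]) (by decide +kernel)

namespace Realizable

lemma hyperbolicPlane : Realizable 2 0 0 True := by
  rw [← signature_hyperbolicPlane]
  exact ⟨_, .of_natAbs_det_eq_one isEvenGram_hyperbolicPlane (by decide)⟩

lemma two_smul_hyperbolicPlane : Realizable 2 2 0 True := by
  rw [← signature_hyperbolicPlane]
  exact ⟨_, .two_smul_of_natAbs_det_eq_one isEvenGram_hyperbolicPlane (by decide)⟩

lemma posA₁ : Realizable 1 1 1 False := by
  have hsig : signature !![2] = 1 := by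
    rw [signature_eq_sum_sign_of_int (P := 1) (d := fun _ => 2) (by decide) (by decide)]
    decide
  rw [← hsig]
  exact ⟨_, .of_natAbs_det_eq_two ⟨by decide, by decide⟩ (by decide)⟩

lemma negA₁ : Realizable 1 1 (-1) False := by
  have hsig : signature (-A 1) = -1 := signature_neg_of_transpose_mul_mul_eq (P := 1) (by decide)
  rw [← hsig]
  exact ⟨_, .of_natAbs_det_eq_two (isEvenGram_neg_of_diag_eq_two (A_isSymm 1) (congrFun (A_diag 1)))
    (by decide)⟩

lemma negD₄ : Realizable 4 2 (-4) True := by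
  have hsig : signature (-D 4) = -4 := signature_neg_of_transpose_mul_mul_eq
    (P := !![1, 0, 0, 1; 0, 0, 0, 2; 0, 1, 0, 1; 0, 0, 1, 1]) (by decide +kernel)
  have heven : IsEvenGram (-D 4) := isEvenGram_neg_of_diag_eq_two (D_isSymm 4) (D_diag 4)
  have hdet : (-D 4).det.natAbs = 4 := by decide +kernel
  have : NeZero (-D 4).det := neZero_of_natAbs_eq hdet
  refine ⟨-D 4, heven, ⟨!![-2, -2, -1, -1; -2, -4, -2, -2; -1, -2, -2, -1; -1, -2, -1, -2],
    by decide +kernel⟩, hdet, hsig, iff_true_intro ?_⟩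
  exact discIntegral_of_natAbs_det_eq_four heven hdet (by rw [hsig]; decide)

lemma negE₇ : Realizable 7 1 (-7) False := by
  have hsig : signature (-E₇) = -7 := signature_neg_of_transpose_mul_mul_eq
    (P := !![1, 0, 0, 0, 1, 1, 1; 0, 1, 0, 0, 1, 1, 2; 0, 0, 0, 0, 2, 2, 2; 0, 0, 0, 0, 2, 2, 4;
      0, 0, 1, 0, 1, 2, 3; 0, 0, 0, 0, 0, 2, 2; 0, 0, 0, 1, 0, 1, 1]) (by decide +kernel)
  rw [← hsig]
  exact ⟨_, .of_natAbs_det_eq_two (isEvenGram_neg_of_diag_eq_two E₇_isSymm E₇_diag)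
    (by simp [det_neg, E₇_det])⟩

lemma negE₈ : Realizable 8 0 (-8) True := by
  rw [← signature_neg_E₈]
  exact ⟨_, .of_natAbs_det_eq_one isEvenGram_neg_E₈ natAbs_det_neg_E₈⟩

lemma two_smul_negE₈ : Realizable 8 8 (-8) True := by
  rw [← signature_neg_E₈]
  exact ⟨_, .two_smul_of_natAbs_det_eq_one isEvenGram_neg_E₈ natAbs_det_neg_E₈⟩

end Realizable

end Examples

section Necessity

namespace HasInvariants

variable {ι : Type*} [Fintype ι] [DecidableEq ι] {M : Matrix ι ι ℤ} {a : ℕ} {s : ℤ} {e : Prop}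

lemma length_le_card (h : HasInvariants M a s e) : a ≤ Fintype.card ι :=
  have ⟨_, hX⟩ := h.exists_mul_eq
  le_card_of_mul_eq_smul_one one_lt_two hX h.natAbs_det

lemma signature_modEq_two (h : HasInvariants M a s e) : s ≡ a [ZMOD 2] := by
  have := h.neZero_det
  obtain ⟨X, hX⟩ := h.exists_mul_eq
  rw [← h.signature_eq]
  exact signature_modEq_two_of_natAbs_det_eq h.isEvenGram hX h.natAbs_det

lemma four_dvd_signature (h : HasInvariants M a s e) (he : e) : 4 ∣ s := by
  have := h.neZero_det
  rw [← h.signature_eq]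
  exact four_dvd_signature_of_discIntegral h.isEvenGram (h.discIntegral_iff.2 he)

lemma discIntegral_of_length_eq_zero (h : HasInvariants M 0 s e) : e := by
  have := h.neZero_det
  exact h.discIntegral_iff.1 (discIntegral_of_natAbs_det_eq_one h.natAbs_det)

lemma signature_modEq_eight_of_length_le_one (h : HasInvariants M a s e) (ha : a ≤ 1) :
    s ≡ a [ZMOD 8] ∨ s ≡ -a [ZMOD 8] := by
  have := h.neZero_det
  rw [← h.signature_eq]
  obtain rfl | rfl := Nat.le_one_iff_eq_zero_or_eq_one.1 ha
  · exact .inl (Int.modEq_zero_iff_dvd.2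
      (eight_dvd_signature_of_natAbs_det_eq_one h.isEvenGram h.natAbs_det))
  · exact signature_modEq_eight_of_natAbs_det_eq_two h.isEvenGram h.natAbs_det

lemma discIntegral_of_length_eq_two (h : HasInvariants M 2 s e) (hs : s ≡ 4 [ZMOD 8]) : e := by
  have := h.neZero_det
  exact h.discIntegral_iff.1
    (discIntegral_of_natAbs_det_eq_four h.isEvenGram h.natAbs_det (h.signature_eq ▸ hs))

lemma eight_dvd_signature_of_length_eq_card (h : HasInvariants M (Fintype.card ι) s e) (he : e) :
    8 ∣ s := by
  have := h.neZero_det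
  obtain ⟨X, hX⟩ := h.exists_mul_eq
  rw [← h.signature_eq]
  exact eight_dvd_signature_of_natAbs_det_eq_two_pow_card h.isEvenGram hX h.natAbs_det
    (h.discIntegral_iff.2 he)

end HasInvariants

end Necessity

section Existence

namespace Realizable

lemma add_D₄_E₈ {r a : ℕ} {s : ℤ} (h : Realizable r a s True) (k x z : ℕ) :
    Realizable (r + (4 * k + 8 * x + 8 * z)) (a + (2 * k + 8 * z))
      (s - (4 * k + 8 * x + 8 * z)) True :=
  (((h.add_mul negD₄ k).add_mul negE₈ x).add_mul two_smul_negE₈ z).congr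
    (by ring) (by ring) (by ring) (by simp)

lemma add_A₁_E₈ {r a : ℕ} {s : ℤ} {e : Prop} (h : Realizable r a s e) (m j : ℕ) :
    Realizable (r + (m + 8 * j)) (a + m) (s - (m + 8 * j)) (e ∧ m = 0) :=
  ((h.add_mul negA₁ m).add_mul negE₈ j).congr (by ring) (by ring) (by ring) (by simp)

theorem of_discIntegral {r a : ℕ} (har : a ≤ r) (ha : Even a) (hr : r % 4 = 2)
    (hzero : a = 0 → r % 8 = 2) (hfull : a = r → r % 8 = 2) : Realizable r a (2 - r) True := by
  obtain ⟨k, u, x, z, hu, hrank, hlen⟩ : ∃ k u x z : ℕ, u ≤ 1 ∧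
      2 + (4 * k + 8 * x + 8 * z) = r ∧ 2 * u + (2 * k + 8 * z) = a := by
    obtain ⟨b, rfl⟩ := ha
    obtain ⟨k, hk⟩ : ∃ k, k = (r - 2) / 4 % 2 := ⟨_, rfl⟩
    exact ⟨k + 2 * ((b - k) / 2 % 2), (b - k) % 2,
      (r - 2 - 4 * k) / 8 - (b - k) / 2 % 2 - (b - k) / 4, (b - k) / 4,
      by omega, by omega, by omega⟩
  interval_cases u
  · exact (hyperbolicPlane.add_D₄_E₈ k x z).congr hrank (by omega) (by omega) .rfl
  · exact (two_smul_hyperbolicPlane.add_D₄_E₈ k x z).congr hrank (by omega) (by omega) .rfl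

theorem of_not_discIntegral {r a : ℕ} (ha : a ≠ 0) (har : a ≤ r) (hmod : r % 2 = a % 2)
    (hone : a = 1 → r % 8 = 3 ∨ r % 8 = 1) (htwo : a = 2 → r % 8 ≠ 6) (hr : 2 ≤ r) :
    Realizable r a (2 - r) False := by
  have hcases : (r - a) % 8 = 0 ∨ (r - a) % 8 = 2 ∨ (r - a) % 8 = 4 ∨ (r - a) % 8 = 6 := by omega
  obtain ⟨j, hj⟩ : ∃ j, j = (r - a) / 8 := ⟨_, rfl⟩
  rcases hcases with h | h | h | h
  · exact (posA₁.add_A₁_E₈ (a - 1) j).congr (by omega) (by omega) (by omega) (by simp)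
  · exact (hyperbolicPlane.add_A₁_E₈ a j).congr (by omega) (by omega) (by omega) (by simp [ha])
  · exact ((hyperbolicPlane.add negD₄).add_A₁_E₈ (a - 2) j).congr (by omega) (by omega) (by omega)
      (by grind)
  · exact ((posA₁.add negE₇).add_A₁_E₈ (a - 2) j).congr (by omega) (by omega) (by omega) (by simp)

end Realizable

end Existence

/-- Nikulin's existence criterion for even hyperbolic 2-elementary lattices with
invariants `(r, a, δ)`. -/
theorem stmt_8 (r a δ : ℕ) (hr : 2 ≤ r) (hδ : δ = 0 ∨ δ = 1) :
    (∃ M : Matrix (Fin r) (Fin r) ℤ, M.IsSymm ∧ (∀ i, Even (M i i)) ∧ M.det ≠ 0 ∧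
        IsHyperbolicGram M ∧ ElemOfLength 2 a M ∧ (δ = 0 ↔ DeltaZero M)) ↔
      (a ≤ r ∧
        r % 2 = a % 2 ∧
        (δ = 0 → r % 4 = 2) ∧
        (a = 0 → δ = 0) ∧
        (a ≤ 1 → (r % 8 = (2 + a) % 8 ∨ r % 8 = (2 - a) % 8)) ∧
        ((a = 2 ∧ r % 8 = 6) → δ = 0) ∧
        ((δ = 0 ∧ a = r) → r % 8 = 2)) := by
  have : NeZero r := ⟨by omega⟩
  simp only [← hasInvariants_iff]
  constructor
  · rintro ⟨M, h⟩
    have hmod := h.signature_modEq_two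
    have hlow := h.signature_modEq_eight_of_length_le_one
    simp only [Int.ModEq] at hmod hlow
    refine ⟨by simpa using h.length_le_card, by omega, fun he => ?_, ?_, by omega, ?_, ?_⟩
    · have := h.four_dvd_signature he
      omega
    · rintro rfl
      exact h.discIntegral_of_length_eq_zero
    · rintro ⟨rfl, hr6⟩
      exact h.discIntegral_of_length_eq_two (by simp only [Int.ModEq]; omega)
    · rintro ⟨he, ha⟩
      rw [show a = Fintype.card (Fin r) by simpa using ha] at h
      have := h.eight_dvd_signature_of_length_eq_card he
      omega
  · rintro ⟨har, hmod, hfour, hzero, hlow, htwo, hfull⟩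
    change Realizable r a (2 - r) (δ = 0)
    rcases hδ with rfl | rfl
    · simp only [eq_self]
      exact .of_discIntegral har (by grind) (hfour rfl) (by omega) (by omega)
    · simp only [one_ne_zero]
      exact .of_not_discIntegral (by omega) har hmod (by omega) (by omega) hr
end
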